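/- There exists a constant c ∈ ℕ such that for every 2-VASS V = (Q,T) and all configurations p(u), q(v) with u,v ∈ ℕ²: if p(u) →*_{ℕ²} q(v), then there exists a word π ∈ T* with p(u) →^π_{ℕ²} q(v) and |π| ≤ 2^{(|Q| + |T| + log₂(‖T‖+2) + log₂(‖u‖+2) + log₂(‖v‖+2))^c}. -/

import Mathlib

namespace VASS

/-- Integer vectors of dimension `d`. -/
abbrev Vec (d : ℕ) := Fin d → ℤ

/-- A transition of a `d`-VASS: source state, update vector, target state. -/
abbrev Trans (d : ℕ) := ℕ × Vec d × ℕ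

/-- The norm of a vector: maximum of absolute values of its components. -/
def vnorm {d : ℕ} (z : Vec d) : ℕ := Finset.univ.sup fun i => (z i).natAbs

/-- The norm of a transition set. -/
def tnorm {d : ℕ} (T : Finset (Trans d)) : ℕ := T.sup fun t => vnorm t.2.1

/-- The displacement of a word of transitions. -/
def disp {d : ℕ} (π : List (Trans d)) : Vec d := (π.map fun t => t.2.1).sum

/-- `IsPathFrom p q π` : `π` is a path from `p` to `q`. -/
def IsPathFrom {d : ℕ} : ℕ → ℕ → List (Trans d) → Prop
  | p, q, [] => p = q
  | p, q, t :: rest => t.1 = p ∧ IsPathFrom t.2.2 q rest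

/-- ℕ^d as a subset of ℤ^d. -/
def NatSet (d : ℕ) : Set (Vec d) := {v | ∀ i, 0 ≤ v i}

/-- `p(u) →^π_A q(v)`. -/
def Run {d : ℕ} (T : Finset (Trans d)) (A : Set (Vec d)) (p : ℕ) (u : Vec d)
    (q : ℕ) (v : Vec d) (π : List (Trans d)) : Prop :=
  (∀ t ∈ π, t ∈ T) ∧ IsPathFrom p q π ∧ u ∈ A ∧ v = u + disp π ∧
    ∀ i, 1 ≤ i → i ≤ π.length → u + disp (π.take i) ∈ A

/-- `p(u) →*_A q(v)`. -/
def Reach {d : ℕ} (T : Finset (Trans d)) (A : Set (Vec d)) (p : ℕ) (u : Vec d)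
    (q : ℕ) (v : Vec d) : Prop := ∃ π, Run T A p u q v π

/-- A linear path scheme `α₀ β₁* α₁ ⋯ β_k* α_k`, presented as the initial
segment `α₀` together with the list of pairs `(βᵢ, αᵢ)`. -/
abbrev LPS (d : ℕ) := List (Trans d) × List (List (Trans d) × List (Trans d))

/-- The underlying word `α₀ β₁ α₁ ⋯ β_k α_k` of a linear path scheme. -/
def lpsSupport {d : ℕ} (ρ : LPS d) : List (Trans d) :=
  ρ.1 ++ (ρ.2.map fun s => s.1 ++ s.2).flatten

/-- The length of a linear path scheme. -/
def lpsLen {d : ℕ} (ρ : LPS d) : ℕ := (lpsSupport ρ).length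

/-- The number of cycles of a linear path scheme. -/
def numCycles {d : ℕ} (ρ : LPS d) : ℕ := ρ.2.length

/-- `ρ` is a linear path scheme from `p` to `q` over the transition set `T`:
its underlying word uses transitions from `T` and is a path from `p` to `q`,
and each `βᵢ` is a cycle. -/
def IsLPSFrom {d : ℕ} (T : Finset (Trans d)) (p q : ℕ) (ρ : LPS d) : Prop :=
  (∀ t ∈ lpsSupport ρ, t ∈ T) ∧ IsPathFrom p q (lpsSupport ρ) ∧
    ∀ s ∈ ρ.2, s.1 ≠ [] ∧ ∃ r, IsPathFrom r r s.1

/-- The word `α₀ β₁^{e₁} α₁ ⋯ β_k^{e_k} α_k` of a linear path scheme. -/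
def lpsWord {d : ℕ} (ρ : LPS d) (e : List ℕ) : List (Trans d) :=
  ρ.1 ++ (List.zipWith (fun s n => (List.replicate n s.1).flatten ++ s.2) ρ.2 e).flatten

/-- Membership in the language of a linear path scheme. -/
def InLang {d : ℕ} (ρ : LPS d) (π : List (Trans d)) : Prop :=
  ∃ e : List ℕ, e.length = numCycles ρ ∧ π = lpsWord ρ e

/-- `p(u) →^S_A q(v)` for a finite set `S` of linear path schemes. -/
def SReach {d : ℕ} (T : Finset (Trans d)) (S : Finset (LPS d)) (A : Set (Vec d))
    (p : ℕ) (u : Vec d) (q : ℕ) (v : Vec d) : Prop :=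
  ∃ ρ ∈ S, ∃ π, InLang ρ π ∧ Run T A p u q v π

/-- δ(ρ): the set of displacements of words in the language of `ρ`. -/
def DispSet {d : ℕ} (ρ : LPS d) : Set (Vec d) := {z | ∃ π, InLang ρ π ∧ z = disp π}

/-- A quadrant of ℤ². -/
def IsQuadrant (Z : Set (Vec 2)) : Prop :=
  ∃ ε : Fin 2 → Bool, Z = {v | ∀ i, if ε i then 0 ≤ v i else v i ≤ 0}

/-- A linear path scheme is zigzag-free if the displacements of all its cycles
lie in a single quadrant. -/
def ZigzagFree (ρ : LPS 2) : Prop :=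
  ∃ Z, IsQuadrant Z ∧ ∀ s ∈ ρ.2, disp s.1 ∈ Z

/-!
If a run over `ℕ²` exists, then one exists inside a box `[0, R]²` with `R` exponential in the input.
Removing repeated configurations from it leaves at most `|Q| (R + 1)²` steps.

To confine the run, cut it at its visits to a small square `[0, B)²`. Outside of the square, the run
decomposes into boundedly many pieces: loops in the interior, where both counters are at least `D`,
and stretches in a strip, where one counter is less than `D` and can be stored in the state. Loops
in the interior and one-counter walks have normal forms, in which a few short cycles are iterated,
and these can be spread out so as to stay close to the box spanned by their endpoints.

The source, the target and the size of the required box of such a piece satisfy linear constraints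
with small coefficients. Homogenised by an additional scale coordinate, they are described by a
monoid that is generated by small vectors, and such monoids are closed under composition. So the
intermediate configurations between all the pieces can be chosen small at the same time.
-/

section Walks

variable {α W : Type*} [DecidableEq α] [AddCommMonoid W] {E : α → W → α → Prop}

/-- `Walk E p q z L S`: the graph with weighted edges `E` has a walk from `p` to `q` of total
weight `z` and length `L` whose set of visited vertices is `S`. -/
inductive Walk (E : α → W → α → Prop) : α → α → W → ℕ → Finset α → Prop
  | nil (p : α) : Walk E p p 0 0 {p}
  | snoc {p q r : α} {z e : W} {L : ℕ} {S : Finset α} :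
      Walk E p q z L S → E q e r → Walk E p r (z + e) (L + 1) (insert r S)

/-- `c` is the weight of a closed walk of length at most `N` through a vertex of `S`. Such a closed
walk can be inserted into every walk that visits `S`. -/
def IsCycleThrough (E : α → W → α → Prop) (N : ℕ) (S : Finset α) (c : W) : Prop :=
  ∃ r ∈ S, ∃ L ≤ N, ∃ S', Walk E r r c L S'

variable {p q r : α} {z z' c : W} {L L' N : ℕ} {S S' Q : Finset α}

lemma IsCycleThrough.mono (hc : IsCycleThrough E L S c) (hL : L ≤ N) (hS : S ⊆ S') :
    IsCycleThrough E N S' c :=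
  let ⟨r, hr, K, hK, h⟩ := hc
  ⟨r, hS hr, K, hK.trans hL, h⟩

namespace Walk

lemma target_mem (h : Walk E p q z L S) : q ∈ S := by
  cases h <;> simp

lemma source_mem (h : Walk E p q z L S) : p ∈ S := by
  induction h <;> simp [*]

lemma card_le (h : Walk E p q z L S) : S.card ≤ L + 1 := by
  induction h with
  | nil => simp
  | snoc _ _ ih => exact (Finset.card_insert_le _ _).trans (by omega)

lemma subset (hE : ∀ p e q, E p e q → q ∈ Q) (h : Walk E p q z L S) (hp : p ∈ Q) : S ⊆ Q := by
  induction h with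
  | nil => simpa using hp
  | snoc _ he ih => exact Finset.insert_subset (hE _ _ _ he) ih

lemma append (h : Walk E p q z L S) (h' : Walk E q r z' L' S') :
    Walk E p r (z + z') (L + L') (S ∪ S') := by
  induction h' with
  | nil => simpa [Finset.union_eq_left.2 (Finset.singleton_subset_iff.2 h.target_mem)] using h
  | snoc _ he ih =>
    rw [← add_assoc, ← add_assoc, Finset.union_insert]
    exact ih.snoc he

lemma split (h : Walk E p q z L S) (hr : r ∈ S) :
    ∃ z₁ z₂ L₁ L₂ S₁ S₂, Walk E p r z₁ L₁ S₁ ∧ Walk E r q z₂ L₂ S₂ ∧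
      z₁ + z₂ = z ∧ L₁ + L₂ = L ∧ S₁ ∪ S₂ = S := by
  induction h with
  | nil =>
    obtain rfl := Finset.mem_singleton.1 hr
    exact ⟨0, 0, 0, 0, {r}, {r}, .nil r, .nil r, by simp, rfl, by simp⟩
  | @snoc _ q' z e L S h he ih =>
    by_cases hS : r ∈ S
    · obtain ⟨z₁, z₂, L₁, L₂, S₁, S₂, h₁, h₂, rfl, rfl, rfl⟩ := ih hS
      exact ⟨z₁, z₂ + e, L₁, L₂ + 1, S₁, insert q' S₂, h₁, h₂.snoc he, (add_assoc ..).symm, rfl,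
        Finset.union_insert ..⟩
    · obtain rfl := (Finset.mem_insert.1 hr).resolve_right hS
      exact ⟨z + e, 0, L + 1, 0, insert r S, {r}, h.snoc he, .nil r, by simp, rfl, by simp⟩

/-- Since at most `L + 1` vertices are visited, the equality `S.card = L + 1` says that the walk
repeats no vertex. -/
lemma exists_simple_snoc {e : W} (h : Walk E p q z L S) (hS : S.card = L + 1) (he : E q e r) :
    ∃ z' L' S', ∃ cs : Multiset W, Walk E p r z' L' S' ∧ S'.card = L' + 1 ∧ S' ⊆ insert r S ∧
      (∀ c ∈ cs, IsCycleThrough E (L + 1) {r} c) ∧ z + e = z' + cs.sum := by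
  by_cases hr : r ∈ S
  · obtain ⟨z₁, z₂, L₁, L₂, S₁, S₂, h₁, h₂, rfl, rfl, rfl⟩ := h.split hr
    refine ⟨z₁, L₁, S₁, {z₂ + e}, h₁, ?_, ?_, ?_, by simp [add_assoc]⟩
    · have hinter : 0 < (S₁ ∩ S₂).card :=
        Finset.card_pos.2 ⟨r, Finset.mem_inter.2 ⟨h₁.target_mem, h₂.source_mem⟩⟩
      have := Finset.card_union_add_card_inter S₁ S₂
      have := h₁.card_le
      have := h₂.card_le
      omega
    · exact Finset.subset_union_left.trans (Finset.subset_insert _ _)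
    · simp only [Multiset.mem_singleton, forall_eq]
      exact ⟨r, Finset.mem_singleton_self r, L₂ + 1, by omega, _, h₂.snoc he⟩
  · exact ⟨z + e, L + 1, insert r S, 0, h.snoc he, by simp [hr, hS], subset_rfl, by simp,
      by simp⟩

lemma exists_skeleton_append_simple (hE : ∀ p e q, E p e q → q ∈ Q) (h : Walk E p q z L S)
    (hp : p ∈ Q) :
    ∃ (r : α) (z₀ : W) (L₀ : ℕ) (z₁ : W) (L₁ : ℕ) (S₁ : Finset α) (cs : Multiset W),
      Walk E p r z₀ L₀ S ∧ L₀ + Q.card ≤ Q.card * S.card ∧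
      Walk E r q z₁ L₁ S₁ ∧ S₁.card = L₁ + 1 ∧ S₁ ⊆ S ∧
      (∀ c ∈ cs, IsCycleThrough E Q.card S c) ∧ z = z₀ + z₁ + cs.sum := by
  induction h with
  | nil =>
    exact ⟨p, 0, 0, 0, 0, {p}, 0, .nil p, by simp, .nil p, by simp, by simp, by simp, by simp⟩
  | @snoc q q' z e L S h he ih =>
    obtain ⟨r, z₀, L₀, z₁, L₁, S₁, cs, h₀, hL₀, h₁, hcard, hS₁, hcs, rfl⟩ := ih
    have hL₁ : L₁ + 1 ≤ Q.card := hcard ▸ Finset.card_le_card (hS₁.trans (h.subset hE hp))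
    by_cases hq : q' ∈ S
    · obtain ⟨z₂, L₂, S₂, cs', h₂, hcard₂, hS₂, hcs', hz⟩ := h₁.exists_simple_snoc hcard he
      rw [Finset.insert_eq_of_mem hq]
      refine ⟨r, z₀, L₀, z₂, L₂, S₂, cs' + cs, h₀, hL₀, h₂, hcard₂,
        hS₂.trans (Finset.insert_subset hq hS₁), ?_, ?_⟩
      · simp only [Multiset.mem_add]
        rintro c (hc | hc)
        · exact (hcs' c hc).mono hL₁ (Finset.singleton_subset_iff.2 hq)
        · exact hcs c hc
      · calc z₀ + z₁ + cs.sum + e = z₀ + (z₁ + e) + cs.sum := by abel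
          _ = z₀ + z₂ + (cs' + cs).sum := by rw [hz, Multiset.sum_add]; abel
    · have h₂ := (h₀.append h₁).snoc he
      rw [Finset.union_eq_left.2 hS₁] at h₂
      refine ⟨q', z₀ + z₁ + e, L₀ + L₁ + 1, 0, 0, {q'}, cs, h₂, ?_, .nil q', by simp, by simp,
        fun c hc => (hcs c hc).mono le_rfl (Finset.subset_insert _ _), by abel⟩
      rw [Finset.card_insert_of_notMem hq, Nat.mul_succ]
      omega

lemma exists_skeleton (hE : ∀ p e q, E p e q → q ∈ Q) (h : Walk E p q z L S) (hp : p ∈ Q) :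
    ∃ (z₀ : W) (L₀ : ℕ) (cs : Multiset W), Walk E p q z₀ L₀ S ∧ L₀ ≤ Q.card * Q.card ∧
      (∀ c ∈ cs, IsCycleThrough E Q.card S c) ∧ z = z₀ + cs.sum := by
  obtain ⟨r, z₀, L₀, z₁, L₁, S₁, cs, h₀, hL₀, h₁, hcard, hS₁, hcs, hz⟩ :=
    h.exists_skeleton_append_simple hE hp
  have hSQ : S ⊆ Q := h.subset hE hp
  have hL₁ : L₁ + 1 ≤ Q.card := hcard ▸ Finset.card_le_card (hS₁.trans hSQ)
  have hmul : Q.card * S.card ≤ Q.card * Q.card :=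
    Nat.mul_le_mul_left _ (Finset.card_le_card hSQ)
  refine ⟨z₀ + z₁, L₀ + L₁, cs, ?_, by omega, hcs, hz⟩
  simpa [Finset.union_eq_left.2 hS₁] using h₀.append h₁

lemma insert_cycle (h : Walk E p q z L S) (hc : IsCycleThrough E N S c) :
    ∃ L' ≤ L + N, ∃ S', S ⊆ S' ∧ Walk E p q (z + c) L' S' := by
  obtain ⟨r, hr, K, hK, S', hcyc⟩ := hc
  obtain ⟨z₁, z₂, L₁, L₂, S₁, S₂, h₁, h₂, rfl, rfl, rfl⟩ := h.split hr
  refine ⟨L₁ + K + L₂, by omega, S₁ ∪ S' ∪ S₂, by grind, ?_⟩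
  rw [add_right_comm]
  exact (h₁.append hcyc).append h₂

lemma insert_multiset (cs : Multiset W) (h : Walk E p q z L S)
    (hcs : ∀ c ∈ cs, IsCycleThrough E N S c) :
    ∃ L' ≤ L + cs.card * N, ∃ S', S ⊆ S' ∧ Walk E p q (z + cs.sum) L' S' := by
  induction cs using Multiset.induction generalizing z L S with
  | empty => exact ⟨L, by simp, S, subset_rfl, by simpa using h⟩
  | cons c cs ih =>
    obtain ⟨L₁, hL₁, S₁, hS₁, h₁⟩ := h.insert_cycle (hcs c (Multiset.mem_cons_self c cs))
    obtain ⟨L₂, hL₂, S₂, hS₂, h₂⟩ :=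
      ih h₁ fun d hd => (hcs d (Multiset.mem_cons_of_mem hd)).mono le_rfl hS₁
    refine ⟨L₂, ?_, S₂, hS₁.trans hS₂, by rwa [Multiset.sum_cons, ← add_assoc]⟩
    rw [Multiset.card_cons, add_one_mul]
    omega

lemma insert_nsmul (h : Walk E p q z L S) (hc : IsCycleThrough E N S c) (k : ℕ) :
    ∃ L' ≤ L + k * N, ∃ S', S ⊆ S' ∧ Walk E p q (z + k • c) L' S' := by
  have hmem : ∀ d ∈ Multiset.replicate k c, IsCycleThrough E N S d :=
    fun d hd => Multiset.eq_of_mem_replicate hd ▸ hc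
  simpa using h.insert_multiset _ hmem

lemma insert_sum_nsmul {ι : Type*} [Fintype ι] {c : ι → W} (h : Walk E p q z L S)
    (hc : ∀ i, IsCycleThrough E N S (c i)) (k : ι → ℕ) :
    ∃ L' ≤ L + (∑ i, k i) * N, ∃ S', S ⊆ S' ∧ Walk E p q (z + ∑ i, k i • c i) L' S' := by
  have hmem : ∀ d ∈ ∑ i, Multiset.replicate (k i) (c i), IsCycleThrough E N S d := by
    intro d hd
    obtain ⟨i, -, hi⟩ := Multiset.mem_sum.1 hd
    exact Multiset.eq_of_mem_replicate hi ▸ hc i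
  simpa [Multiset.sum_sum] using h.insert_multiset _ hmem

lemma iterate_succ (h : Walk E p p z L S) (k : ℕ) :
    Walk E p p ((k + 1) • z) ((k + 1) * L) S := by
  induction k with
  | zero => simpa using h
  | succ k ih => simpa [succ_nsmul _ (k + 1), Nat.succ_mul (k + 1)] using ih.append h

lemma isCycleThrough_zero (h : Walk E p q z L S) : IsCycleThrough E N S 0 :=
  ⟨p, h.source_mem, 0, Nat.zero_le _, _, .nil p⟩

end Walk

end Walks

section WalkNorms

variable {α W : Type*} [DecidableEq α] [SeminormedAddCommGroup W] {E : α → W → α → Prop}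
  {p q : α} {z c : W} {L N : ℕ} {S : Finset α} {M : ℝ}

lemma Walk.norm_le (hE : ∀ p e q, E p e q → ‖e‖ ≤ M) (h : Walk E p q z L S) :
    ‖z‖ ≤ L * M := by
  induction h with
  | nil => simp
  | snoc _ he ih =>
    push_cast
    rw [add_one_mul]
    exact norm_add_le_of_le ih (hE _ _ _ he)

lemma IsCycleThrough.norm_le (hE : ∀ p e q, E p e q → ‖e‖ ≤ M) (hM : 0 ≤ M)
    (hc : IsCycleThrough E N S c) : ‖c‖ ≤ N * M := by
  obtain ⟨_, _, L, hL, _, h⟩ := hc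
  refine (h.norm_le hE).trans ?_
  gcongr

end WalkNorms

section Combinations

variable {G ι : Type*} {d r a b : ℕ}

lemma norm_le_natCast_iff {z : Vec d} : ‖z‖ ≤ a ↔ ∀ i, |z i| ≤ a := by
  rw [pi_norm_le_iff_of_nonneg a.cast_nonneg]
  exact forall_congr' fun i => by rw [Int.norm_eq_abs]; norm_cast

lemma exists_maximal_shift (n : ι → ℕ) {τ : ι → ℤ} (hτ : ∃ i, 0 < τ i) :
    ∃ k : ℕ, (∀ i, k * τ i ≤ n i) ∧ ∃ i, n i < (k + 1) * τ i := by
  classical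
  obtain ⟨i₀, hi₀⟩ := hτ
  have hex : ∃ k : ℕ, ∃ i, (n i : ℤ) < k * τ i :=
    ⟨n i₀ + 1, i₀, by push_cast; nlinarith⟩
  obtain ⟨k, hk⟩ : ∃ k, Nat.find hex = k + 1 :=
    Nat.exists_eq_succ_of_ne_zero fun h0 => by
      obtain ⟨i, hi⟩ := h0 ▸ Nat.find_spec hex
      simp only [Nat.cast_zero, zero_mul] at hi
      omega
  refine ⟨k, fun i => ?_, ?_⟩
  · by_contra! hlt
    exact Nat.find_min hex (by omega : k < Nat.find hex) ⟨i, hlt⟩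
  · simpa [hk] using Nat.find_spec hex

variable [AddCommGroup G] [Fintype ι]

lemma exists_exchange {x : ι → G} {y : G} {s : ℕ} {τ : ι → ℤ} (h : s • y = ∑ i, τ i • x i)
    (hpos : ∃ i, 0 < τ i) (hb : ∀ i, τ i ≤ b) (n : ι → ℕ) :
    ∃ (k : ℕ) (m : ι → ℕ), ∑ i, n i • x i = k • y + ∑ i, m i • x i ∧ ∃ i, m i ≤ b := by
  obtain ⟨k, hk, i, hi⟩ := exists_maximal_shift n hpos
  have hm : ∀ i, ((n i - k * τ i).toNat : ℤ) = n i - k * τ i :=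
    fun i => Int.toNat_of_nonneg (sub_nonneg.2 (hk i))
  refine ⟨k * s, fun i => (n i - k * τ i).toNat, ?_, i, ?_⟩
  · simp only [mul_smul, h, ← natCast_zsmul, hm, sub_smul, Finset.sum_sub_distrib,
      Finset.smul_sum]
    abel
  · zify
    rw [hm]
    linarith [hb i]

lemma exists_exchange_of_relation {x : ι → G} {τ : ι → ℤ} (h : ∑ i, τ i • x i = 0) (hτ : τ ≠ 0)
    (hb : ∀ i, |τ i| ≤ b) (n : ι → ℕ) :
    ∃ m : ι → ℕ, ∑ i, n i • x i = ∑ i, m i • x i ∧ ∃ i, m i ≤ b := by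
  obtain ⟨σ, hσ, hpos, hσb⟩ :
      ∃ σ : ι → ℤ, ∑ i, σ i • x i = 0 ∧ (∃ i, 0 < σ i) ∧ ∀ i, σ i ≤ b := by
    obtain ⟨i, hi⟩ := Function.ne_iff.1 hτ
    rcases lt_or_gt_of_ne hi with hneg | hpos
    · exact ⟨-τ, by simp [h], ⟨i, by simpa using hneg⟩, fun i => (neg_le_abs _).trans (hb i)⟩
    · exact ⟨τ, h, ⟨i, hpos⟩, fun i => (le_abs_self _).trans (hb i)⟩
  obtain ⟨k, m, hm, hle⟩ :=
    exists_exchange (y := (0 : G)) (s := 0) (by simpa using hσ.symm) hpos hσb n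
  exact ⟨m, by simpa using hm, hle⟩

/-- Every combination of `r + 1` vectors of `X` with natural coefficients can be rewritten so that
one of the coefficients is at most `b`. -/
def HasExchange (X : Set G) (r b : ℕ) : Prop :=
  ∀ x : Fin (r + 1) → G, (∀ i, x i ∈ X) → ∀ n : Fin (r + 1) → ℕ,
    ∃ m : Fin (r + 1) → ℕ, ∑ i, n i • x i = ∑ i, m i • x i ∧ ∃ i, m i ≤ b

lemma HasExchange.anti {X Y : Set G} (hY : HasExchange Y r b) (hXY : X ⊆ Y) : HasExchange X r b :=
  fun x hx => hY x fun i => hXY (hx i)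

lemma HasExchange.exists_finset_sum_eq {X : Set G} (hX : HasExchange X r b) (h0 : 0 ∈ X)
    (S : Finset G) (hS : ∀ x ∈ S, x ∈ X) (f : G → ℕ) :
    ∃ (cs : Multiset G) (c : Fin r → G) (n : Fin r → ℕ), cs.card ≤ S.card * b ∧
      (∀ x ∈ cs, x ∈ X) ∧ (∀ i, c i ∈ X) ∧ ∑ x ∈ S, f x • x = cs.sum + ∑ i, n i • c i := by
  classical
  induction S using Finset.induction_on with
  | empty => exact ⟨0, 0, 0, by simp, by simp, fun _ => h0, by simp⟩
  | insert x S hx ih =>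
    obtain ⟨cs, c, n, hcard, hcs, hc, hsum⟩ := ih fun y hy => hS y (Finset.mem_insert_of_mem hy)
    let x' : Fin (r + 1) → G := Fin.cons x c
    have hmem : ∀ i, x' i ∈ X := Fin.cases (hS x (Finset.mem_insert_self x S)) hc
    obtain ⟨m, hm, i, hi⟩ := hX x' hmem (Fin.cons (f x) n)
    refine ⟨Multiset.replicate (m i) (x' i) + cs, fun j => x' (i.succAbove j),
      fun j => m (i.succAbove j), ?_, ?_, fun j => hmem _, ?_⟩
    · rw [Multiset.card_add, Multiset.card_replicate, Finset.card_insert_of_notMem hx,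
        add_one_mul]
      omega
    · simp only [Multiset.mem_add]
      rintro y (hy | hy)
      · exact Multiset.eq_of_mem_replicate hy ▸ hmem i
      · exact hcs y hy
    · have hexch : f x • x + ∑ j, n j • c j = ∑ j, m j • x' j := by
        simpa [Fin.sum_univ_succ, x'] using hm
      rw [Finset.sum_insert hx, hsum, add_left_comm, hexch, Fin.sum_univ_succAbove _ i,
        Multiset.sum_add, Multiset.sum_replicate]
      abel

attribute [local instance] Matrix.seminormedAddCommGroup in
lemma exists_small_relation (hd : 0 < d) (ha : 1 ≤ a) {x : Fin (d + 1) → Vec d}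
    (hx : ∀ i, ‖x i‖ ≤ a) :
    ∃ t : Fin (d + 1) → ℤ, t ≠ 0 ∧ (∀ i, |t i| ≤ (((d + 1) * a) ^ d : ℕ)) ∧ ∑ i, t i • x i = 0 := by
  set A : Matrix (Fin d) (Fin (d + 1)) ℤ := Matrix.of fun k i => x i k
  have hA : ‖A‖ ≤ a := (Matrix.norm_le_iff a.cast_nonneg).2 fun k i =>
    (norm_le_pi_norm (x i) k).trans (hx i)
  obtain ⟨t, ht, hAt, hnorm⟩ := Int.Matrix.exists_ne_zero_int_vec_norm_le A (by simp) (by simpa)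
  refine ⟨t, ht, ?_, ?_⟩
  · have hle : ‖t‖ ≤ (((d + 1) * a) ^ d : ℕ) := by
      refine hnorm.trans ?_
      have : (1 : ℝ) ≤ a := by exact_mod_cast ha
      simp only [Fintype.card_fin, Nat.cast_add, Nat.cast_one, add_sub_cancel_left, div_one,
        Real.rpow_natCast, Nat.cast_pow, Nat.cast_mul]
      gcongr
      exact max_le this hA
    exact norm_le_natCast_iff.1 hle
  · ext k
    simpa [Matrix.mulVec, dotProduct, A, mul_comm] using congrFun hAt k

lemma hasExchange_closedBall (hd : 0 < d) (ha : 1 ≤ a) :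
    HasExchange (Metric.closedBall (0 : Vec d) a) d (((d + 1) * a) ^ d) := by
  intro x hx n
  obtain ⟨t, ht, hbound, hrel⟩ :=
    exists_small_relation hd ha fun i => mem_closedBall_zero_iff.1 (hx i)
  exact exists_exchange_of_relation hrel ht hbound n

lemma exists_natCast_relation (hd : 0 < d) (ha : 1 ≤ a) {y : Vec d} {c : Fin d → Vec d}
    (hy : ‖y‖ ≤ a) (hc : ∀ i, ‖c i‖ ≤ a) :
    ∃ (s : ℕ) (τ : Fin d → ℤ), (0 < s ∨ τ ≠ 0) ∧ s ≤ ((d + 1) * a) ^ d ∧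
      (∀ i, |τ i| ≤ (((d + 1) * a) ^ d : ℕ)) ∧ s • y + ∑ i, τ i • c i = 0 := by
  obtain ⟨t, ht, hbound, hrel⟩ :=
    exists_small_relation (x := Fin.cons y c) hd ha (Fin.cases hy hc)
  simp only [Fin.sum_univ_succ, Fin.cons_zero, Fin.cons_succ] at hrel
  have hne : 0 < (t 0).natAbs ∨ Fin.tail t ≠ 0 := by
    rw [Int.natAbs_pos]
    by_contra! h
    exact ht (funext (Fin.cases h.1 fun i => congrFun h.2 i))
  have hs : (t 0).natAbs ≤ ((d + 1) * a) ^ d := by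
    zify
    exact_mod_cast hbound 0
  rcases le_total 0 (t 0) with h0 | h0
  · refine ⟨(t 0).natAbs, Fin.tail t, hne, hs, fun i => hbound i.succ, ?_⟩
    rw [← natCast_zsmul, Int.natAbs_of_nonneg h0]
    exact hrel
  · refine ⟨(t 0).natAbs, -Fin.tail t, by simpa using hne, hs, fun i => ?_, ?_⟩
    · simpa [Fin.tail] using hbound i.succ
    · rw [← natCast_zsmul, Int.ofNat_natAbs_of_nonpos h0]
      simpa [Fin.tail, neg_add_eq_zero, eq_neg_iff_add_eq_zero, add_comm] using hrel

lemma exists_nonneg_relation_or_exchange (hd : 0 < d) (ha : 1 ≤ a) {y : Vec d}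
    {c : Fin d → Vec d} (hy : ‖y‖ ≤ a) (hc : ∀ i, ‖c i‖ ≤ a) (n : Fin d → ℕ) :
    (∃ (s : ℕ) (t : Fin d → ℕ), 0 < s ∧ s ≤ ((d + 1) * a) ^ d ∧
      (∀ i, t i ≤ ((d + 1) * a) ^ d) ∧ s • y + ∑ i, t i • c i = 0) ∨
    ∃ (k : ℕ) (m : Fin d → ℕ), ∑ i, n i • c i = k • y + ∑ i, m i • c i ∧
      ∃ i, m i ≤ ((d + 1) * a) ^ d := by
  obtain ⟨s, τ, hne, hs, hτ, hrel⟩ := exists_natCast_relation hd ha hy hc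
  by_cases hneg : ∃ i, τ i < 0
  · refine Or.inr (exists_exchange (s := s) (τ := -τ) ?_ (by simpa using hneg) ?_ n)
    · simpa [eq_neg_iff_add_eq_zero] using hrel
    · exact fun i => (neg_le_abs _).trans (hτ i)
  push Not at hneg
  lift τ to Fin d → ℕ using hneg
  rcases Nat.eq_zero_or_pos s with rfl | hpos
  · rw [zero_smul, zero_add] at hrel
    obtain ⟨m, hm, hle⟩ := exists_exchange_of_relation hrel (hne.resolve_left (lt_irrefl 0)) hτ n
    exact Or.inr ⟨0, m, by simpa using hm, hle⟩
  · exact Or.inl ⟨s, τ, hpos, hs, fun i => Int.ofNat_le.1 ((le_abs_self _).trans (hτ i)),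
      by simpa using hrel⟩

lemma card_le_of_norm_le {S : Finset (Vec d)} (hS : ∀ c ∈ S, ‖c‖ ≤ a) :
    S.card ≤ (2 * a + 1) ^ d := by
  have hsub : S ⊆ Finset.Icc (-(a : Vec d)) a := fun c hc => by
    have h := norm_le_natCast_iff.1 (hS c hc)
    exact Finset.mem_Icc.2 ⟨fun i => (abs_le.1 (h i)).1, fun i => (abs_le.1 (h i)).2⟩
  refine (Finset.card_le_card hsub).trans_eq ?_
  rw [Pi.card_Icc]
  simp only [Int.card_Icc, Pi.neg_apply, Pi.natCast_apply, Finset.prod_const, Finset.card_univ,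
    Fintype.card_fin]
  congr 1
  omega

lemma exists_multiset_sum_eq (hd : 0 < d) (ha : 1 ≤ a) {X : Set (Vec d)} (h0 : 0 ∈ X)
    (hX : ∀ x ∈ X, ‖x‖ ≤ a) (cs : Multiset (Vec d)) (hcs : ∀ x ∈ cs, x ∈ X) :
    ∃ (cs' : Multiset (Vec d)) (c : Fin d → Vec d) (n : Fin d → ℕ),
      cs'.card ≤ (2 * a + 1) ^ d * ((d + 1) * a) ^ d ∧ (∀ x ∈ cs', x ∈ X) ∧ (∀ i, c i ∈ X) ∧
      cs.sum = cs'.sum + ∑ i, n i • c i := by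
  classical
  have hexch : HasExchange X d (((d + 1) * a) ^ d) :=
    (hasExchange_closedBall hd ha).anti fun x hx => mem_closedBall_zero_iff.2 (hX x hx)
  obtain ⟨cs', c, n, hcard, hcs', hc, hsum⟩ :=
    hexch.exists_finset_sum_eq h0 cs.toFinset (by simpa using hcs) cs.count
  refine ⟨cs', c, n, hcard.trans (Nat.mul_le_mul_right _ ?_), hcs', hc, ?_⟩
  · exact card_le_of_norm_le fun x hx => hX x (hcs x (Multiset.mem_toFinset.1 hx))
  · rw [← hsum, Finset.sum_multiset_count]

end Combinations

section NormalForms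

variable {α : Type*} [DecidableEq α] {d M L : ℕ} {Q S : Finset α} {p q : α}

lemma Walk.exists_normalForm {E : α → Vec d → α → Prop} {z : Vec d} (hd : 0 < d)
    (hQ : ∀ p e q, E p e q → q ∈ Q) (hE : ∀ p e q, E p e q → ‖e‖ ≤ M) (hM : 1 ≤ M)
    (h : Walk E p q z L S) (hp : p ∈ Q) :
    ∃ (y : Vec d) (Ly : ℕ) (r : Vec d) (Lr : ℕ) (Sr : Finset α) (n : Fin d → ℕ)
      (c : Fin d → Vec d), Walk E p q y Ly S ∧ Ly ≤ Q.card ^ 2 ∧ Walk E p q r Lr Sr ∧ S ⊆ Sr ∧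
      Lr ≤ Q.card ^ 2 +
        (2 * (Q.card * M) + 1) ^ d * ((d + 1) * (Q.card * M)) ^ d * Q.card ∧
      (∀ i, IsCycleThrough E Q.card S (c i)) ∧ z = r + ∑ i, n i • c i := by
  obtain ⟨y, Ly, cs, hy, hLy, hcs, rfl⟩ := h.exists_skeleton hQ hp
  have hN : 1 ≤ Q.card := Finset.card_pos.2 ⟨p, hp⟩
  obtain ⟨cs', c, n, hcard, hcs', hc, hsum⟩ :=
    exists_multiset_sum_eq (X := {c | IsCycleThrough E Q.card S c}) hd (Nat.mul_pos hN hM)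
      h.isCycleThrough_zero (fun c hc => by exact_mod_cast hc.norm_le hE M.cast_nonneg) cs hcs
  obtain ⟨Lr, hLr, Sr, hSr, hr⟩ := hy.insert_multiset cs' hcs'
  rw [← sq] at hLy
  exact ⟨y, Ly, y + cs'.sum, Lr, Sr, n, c, hy, hLy, hr, hSr,
    hLr.trans (add_le_add hLy (Nat.mul_le_mul_right _ hcard)), hc, by rw [hsum, add_assoc]⟩

/-- The length bound for the short walks in the normal forms of walks in a graph with `N` vertices
and weights of norm at most `M`. -/
def walkBound (N M : ℕ) : ℕ := 100 * (N ^ 6 * M ^ 4)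

lemma le_walkBound {N M : ℕ} (hM : 1 ≤ M) : N ≤ walkBound N M :=
  calc N ≤ N ^ 6 := Nat.le_self_pow (by norm_num) N
    _ ≤ N ^ 6 * M ^ 4 := Nat.le_mul_of_pos_right _ (by positivity)
    _ ≤ walkBound N M := Nat.le_mul_of_pos_left _ (by norm_num)

lemma pow_mul_pow_le_pow_mul_pow {N M i j k l : ℕ} (hN : 1 ≤ N) (hM : 1 ≤ M) (hij : i ≤ j)
    (hkl : k ≤ l) : N ^ i * M ^ k ≤ N ^ j * M ^ l :=
  Nat.mul_le_mul (Nat.pow_le_pow_right hN hij) (Nat.pow_le_pow_right hM hkl)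

lemma Walk.exists_line_normalForm {E : α → Vec 1 → α → Prop} {z : Vec 1}
    (hQ : ∀ p e q, E p e q → q ∈ Q) (hE : ∀ p e q, E p e q → ‖e‖ ≤ M) (hM : 1 ≤ M)
    (h : Walk E p q z L S) (hp : p ∈ Q) :
    ∃ (r : Vec 1) (Lr : ℕ) (Sr : Finset α) (n : ℕ) (c : Vec 1), Walk E p q r Lr Sr ∧
      Lr ≤ walkBound Q.card M ∧ IsCycleThrough E Q.card Sr c ∧ z = r + n • c := by
  obtain ⟨-, -, r, Lr, Sr, n, c, -, -, hr, hSr, hLr, hc, hz⟩ :=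
    h.exists_normalForm Nat.one_pos hQ hE hM hp
  refine ⟨r, Lr, Sr, n 0, c 0, hr, hLr.trans ?_, (hc 0).mono le_rfl hSr, by simpa using hz⟩
  have hN : 1 ≤ Q.card := Finset.card_pos.2 ⟨p, hp⟩
  have hNM : 1 ≤ Q.card * M := Nat.mul_pos hN hM
  have hsq : Q.card ^ 2 * M ^ 0 ≤ Q.card ^ 6 * M ^ 4 :=
    pow_mul_pow_le_pow_mul_pow hN hM (by norm_num) (by norm_num)
  have hcube : Q.card ^ 3 * M ^ 2 ≤ Q.card ^ 6 * M ^ 4 :=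
    pow_mul_pow_le_pow_mul_pow hN hM (by norm_num) (by norm_num)
  calc Q.card ^ 2 + (2 * (Q.card * M) + 1) ^ 1 * ((1 + 1) * (Q.card * M)) ^ 1 * Q.card
      ≤ Q.card ^ 2 + (3 * (Q.card * M)) ^ 1 * ((1 + 1) * (Q.card * M)) ^ 1 * Q.card := by
        gcongr
        omega
    _ = Q.card ^ 2 * M ^ 0 + 6 * (Q.card ^ 3 * M ^ 2) := by ring
    _ ≤ walkBound Q.card M := by rw [walkBound]; omega

/-- `z` is the weight of a closed walk at `p` composed of a closed walk `r`, at least one copy of a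
closed walk `y`, both of length at most `Λ`, and copies of a cycle of length at most `N` that can be
inserted into any of the copies of `y`. -/
def HasSpreadForm {W : Type*} [AddCommMonoid W] (E : α → W → α → Prop) (N Λ : ℕ) (p : α) (z : W) :
    Prop :=
  ∃ (r : W) (Lr : ℕ) (Sr : Finset α) (y : W) (Ly : ℕ) (Sy : Finset α) (c : W) (K m : ℕ),
    Walk E p p r Lr Sr ∧ Lr ≤ Λ ∧ Walk E p p y Ly Sy ∧ Ly ≤ Λ ∧ IsCycleThrough E N Sy c ∧
    z = r + (K + 1) • y + m • c

section SpreadForm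

variable {W : Type*} [AddCommGroup W] {E : α → W → α → Prop} {r y : W} {c : Fin 2 → W}
  {Lr Ly N Λ : ℕ} {Sr : Finset α}

lemma hasSpreadForm_of_small_coeff (hr : Walk E p p r Lr Sr) (hy : Walk E p p y Ly S) (hS : S ⊆ Sr)
    (hc : ∀ i, IsCycleThrough E N S (c i)) (k : ℕ) {n : Fin 2 → ℕ} (i : Fin 2)
    (hr' : Lr + n i * N ≤ Λ) (hy' : Ly ≤ Λ) :
    HasSpreadForm E N Λ p (r + (k • y + ∑ i, n i • c i)) := by
  obtain ⟨Lr', hLr', Sr', hSr', hr₁⟩ := hr.insert_nsmul ((hc i).mono le_rfl hS) (n i)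
  have hsum : ∑ i, n i • c i = n i • c i + n (i.succAbove 0) • c (i.succAbove 0) := by
    simp [Fin.sum_univ_succAbove _ i]
  rw [hsum]
  cases k with
  | zero =>
    exact ⟨0, 0, {p}, _, Lr', Sr', c (i.succAbove 0), 0, n (i.succAbove 0), .nil p,
      Nat.zero_le _, hr₁, hLr'.trans hr', (hc _).mono le_rfl (hS.trans hSr'), by simp [add_assoc]⟩
  | succ k =>
    exact ⟨_, Lr', Sr', y, Ly, S, c (i.succAbove 0), k, n (i.succAbove 0), hr₁,
      hLr'.trans hr', hy, hy', hc _, by abel⟩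

/-- Adding one copy of `c 0` to a relation `s • y + ∑ i, t i • c i = 0` gives a closed walk of
weight `c 0` through all of `S`, so that iterating it replaces the copies of `c 0`. -/
lemma hasSpreadForm_of_relation (hr : Walk E p p r Lr Sr) (hy : Walk E p p y Ly S) (hS : S ⊆ Sr)
    (hc : ∀ i, IsCycleThrough E N S (c i)) {s : ℕ} {t : Fin 2 → ℕ} (hs : 0 < s)
    (hrel : s • y + ∑ i, t i • c i = 0) (n : Fin 2 → ℕ) (hr' : Lr ≤ Λ)
    (hy' : s * Ly + (t 0 + t 1 + 1) * N ≤ Λ) :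
    HasSpreadForm E N Λ p (r + ∑ i, n i • c i) := by
  obtain ⟨s, rfl⟩ := Nat.exists_eq_succ_of_ne_zero hs.ne'
  rcases Nat.eq_zero_or_pos (n 0) with h0 | h0
  · simpa using hasSpreadForm_of_small_coeff hr hy hS hc 0 0 (by simpa [h0] using hr')
      (by nlinarith : Ly ≤ Λ)
  obtain ⟨K, hK⟩ := Nat.exists_eq_succ_of_ne_zero h0.ne'
  obtain ⟨L₁, hL₁, S₁, hS₁, h₁⟩ := (hy.iterate_succ s).insert_sum_nsmul hc t
  obtain ⟨L₂, hL₂, S₂, hS₂, h₂⟩ := h₁.insert_cycle ((hc 0).mono le_rfl hS₁)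
  rw [hrel, zero_add] at h₂
  refine ⟨r, Lr, Sr, c 0, L₂, S₂, c 1, K, n 1, hr, hr', h₂, ?_,
    (hc 1).mono le_rfl (hS₁.trans hS₂), ?_⟩
  · rw [Fin.sum_univ_two] at hL₁
    linarith
  · rw [Fin.sum_univ_two, hK, add_assoc]

end SpreadForm

lemma plane_length_le {N M : ℕ} (hN : 1 ≤ N) (hM : 1 ≤ M) :
    N ^ 2 + (2 * (N * M) + 1) ^ 2 * ((2 + 1) * (N * M)) ^ 2 * N ≤ 82 * (N ^ 6 * M ^ 4) := by
  have hNM : 1 ≤ N * M := Nat.mul_pos hN hM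
  have hsq : N ^ 2 * M ^ 0 ≤ N ^ 6 * M ^ 4 :=
    pow_mul_pow_le_pow_mul_pow hN hM (by norm_num) (by norm_num)
  have hfifth : N ^ 5 * M ^ 4 ≤ N ^ 6 * M ^ 4 :=
    pow_mul_pow_le_pow_mul_pow hN hM (by norm_num) le_rfl
  calc N ^ 2 + (2 * (N * M) + 1) ^ 2 * ((2 + 1) * (N * M)) ^ 2 * N
      ≤ N ^ 2 + (3 * (N * M)) ^ 2 * ((2 + 1) * (N * M)) ^ 2 * N := by
        gcongr
        omega
    _ = N ^ 2 * M ^ 0 + 81 * (N ^ 5 * M ^ 4) := by ring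
    _ ≤ 82 * (N ^ 6 * M ^ 4) := by omega

lemma Walk.hasSpreadForm {E : α → Vec 2 → α → Prop} {z : Vec 2}
    (hQ : ∀ p e q, E p e q → q ∈ Q) (hE : ∀ p e q, E p e q → ‖e‖ ≤ M) (hM : 1 ≤ M)
    (h : Walk E p p z L S) (hp : p ∈ Q) :
    HasSpreadForm E Q.card (walkBound Q.card M) p z := by
  obtain ⟨y, Ly, r, Lr, Sr, n, c, hy, hLy, hr, hS, hLr, hc, rfl⟩ :=
    h.exists_normalForm Nat.two_pos hQ hE hM hp
  set N := Q.card
  have hN : 1 ≤ N := Finset.card_pos.2 ⟨p, hp⟩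
  have hM0 : (0 : ℝ) ≤ M := M.cast_nonneg
  have ha : 1 ≤ N ^ 2 * M := Nat.mul_pos (by positivity) hM
  have hNsq : N ≤ N ^ 2 := Nat.le_self_pow two_ne_zero N
  have hy_norm : ‖y‖ ≤ (N ^ 2 * M : ℕ) :=
    (hy.norm_le hE).trans (by push_cast; gcongr; exact_mod_cast hLy)
  have hc_norm : ∀ i, ‖c i‖ ≤ (N ^ 2 * M : ℕ) := fun i =>
    ((hc i).norm_le hE hM0).trans (by push_cast; gcongr; exact_mod_cast hNsq)
  have hLy' : Ly ≤ N ^ 6 * M ^ 4 := by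
    have hsq : N ^ 2 * M ^ 0 ≤ N ^ 6 * M ^ 4 :=
      pow_mul_pow_le_pow_mul_pow hN hM (by norm_num) (by norm_num)
    exact hLy.trans (by simpa using hsq)
  have hLr' : Lr ≤ 82 * (N ^ 6 * M ^ 4) := hLr.trans (plane_length_le hN hM)
  set b := ((2 + 1) * (N ^ 2 * M)) ^ 2 with hb
  have hbN : b * N ^ 2 ≤ 9 * (N ^ 6 * M ^ 4) := by
    have hpow : N ^ 6 * M ^ 2 ≤ N ^ 6 * M ^ 4 :=
      pow_mul_pow_le_pow_mul_pow hN hM le_rfl (by norm_num)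
    rw [hb]
    linarith
  rcases exists_nonneg_relation_or_exchange Nat.two_pos ha hy_norm hc_norm n with
    ⟨s, t, hs, hsb, htb, hrel⟩ | ⟨k, m, hm, i, hi⟩
  · have hsLy : s * Ly ≤ b * N ^ 2 := Nat.mul_le_mul hsb hLy
    have htN : (t 0 + t 1 + 1) * N ≤ (b + b + b) * N ^ 2 :=
      Nat.mul_le_mul (by have := htb 0; have := htb 1; omega) hNsq
    refine hasSpreadForm_of_relation hr hy hS hc hs hrel n ?_ ?_ <;> rw [walkBound] <;> linarith
  · rw [hm]
    have hmN : m i * N ≤ b * N ^ 2 := Nat.mul_le_mul hi hNsq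
    refine hasSpreadForm_of_small_coeff hr hy hS hc k i ?_ ?_ <;> rw [walkBound] <;> linarith

end NormalForms

section Runs

/-- One step between configurations `(p, u)` of the graph with weighted edges `E`, both of which lie
in the region `A`. -/
def Step {α W : Type*} [Add W] (E : α → W → α → Prop) (A : Set (α × W)) (x x' : α × W) : Prop :=
  ∃ e, E x.1 e x'.1 ∧ x'.2 = x.2 + e ∧ x ∈ A ∧ x' ∈ A

/-- Reachability between configurations along steps that stay in the region `A`. -/
abbrev Reaches {α W : Type*} [Add W] (E : α → W → α → Prop) (A : Set (α × W)) :
    α × W → α × W → Prop :=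
  Relation.ReflTransGen (Step E A)

lemma Step.mono {α W : Type*} [Add W] {E : α → W → α → Prop} {A B : Set (α × W)} {x x' : α × W}
    (h : Step E A x x') (hAB : A ⊆ B) : Step E B x x' :=
  let ⟨e, he, heq, hx, hx'⟩ := h
  ⟨e, he, heq, hAB hx, hAB hx'⟩

lemma Reaches.mono {α W : Type*} [Add W] {E : α → W → α → Prop} {A B : Set (α × W)}
    {x x' : α × W} (h : Reaches E A x x') (hAB : A ⊆ B) : Reaches E B x x' :=
  Relation.ReflTransGen.mono (fun _ _ hs => hs.mono hAB) _ _ h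

section Norm

open Metric

variable {α W : Type*} [DecidableEq α] [SeminormedAddCommGroup W] {E : α → W → α → Prop}
  {p q : α} {z c u : W} {L N m : ℕ} {S : Finset α} {M : ℝ} {A : Set W}

lemma Walk.reaches (hE : ∀ p e q, E p e q → ‖e‖ ≤ M) (h : Walk E p q z L S)
    (hA : closedBall u (L * M) ⊆ A) : Reaches E (Prod.snd ⁻¹' A) (p, u) (q, u + z) := by
  induction h with
  | nil => simpa using Relation.ReflTransGen.refl
  | @snoc q q' z e L S h he ih =>
    have hM : 0 ≤ M := (norm_nonneg e).trans (hE _ _ _ he)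
    have hL : (L : ℝ) * M ≤ (L + 1 : ℕ) * M := by push_cast; gcongr; simp
    refine (ih ((closedBall_subset_closedBall hL).trans hA)).tail
      ⟨e, he, (add_assoc ..).symm, hA ?_, hA ?_⟩
    · simpa using (h.norm_le hE).trans (by simpa using hL)
    · simpa using (h.snoc he).norm_le hE

lemma Walk.reaches_nsmul (hE : ∀ p e q, E p e q → ‖e‖ ≤ M) (h : Walk E p p c L S)
    (hA : ∀ k < m, closedBall (u + k • c) (L * M) ⊆ A) :
    Reaches E (Prod.snd ⁻¹' A) (p, u) (p, u + m • c) := by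
  induction m with
  | zero => simpa using Relation.ReflTransGen.refl
  | succ m ih =>
    rw [succ_nsmul, ← add_assoc]
    exact (ih fun k hk => hA k (by omega)).trans (h.reaches hE (hA m m.lt_succ_self))

lemma Walk.reaches_insert_nsmul (hE : ∀ p e q, E p e q → ‖e‖ ≤ M) (hM : 0 ≤ M)
    (h : Walk E p q z L S) (hc : IsCycleThrough E N S c)
    (hA : ∀ k ≤ m, closedBall (u + k • c) ((L + N) * M) ⊆ A) :
    Reaches E (Prod.snd ⁻¹' A) (p, u) (q, u + z + m • c) := by
  obtain ⟨r, hr, K, hK, S', hcyc⟩ := hc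
  obtain ⟨z₁, z₂, L₁, L₂, S₁, S₂, h₁, h₂, rfl, rfl, rfl⟩ := h.split hr
  have hball : ∀ k ≤ m, ∀ L' : ℕ, L' ≤ L₂ + N →
      closedBall (u + z₁ + k • c) (L' * M) ⊆ A := by
    intro k hk L' hL'
    refine (closedBall_subset_closedBall' ?_).trans (hA k hk)
    have hdist : dist (u + z₁ + k • c) (u + k • c) ≤ L₁ * M := by
      simpa [add_right_comm u z₁] using h₁.norm_le hE
    have hlen : (L' + L₁ : ℝ) ≤ (L₁ + L₂ : ℕ) + N := by exact_mod_cast (by omega)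
    calc L' * M + dist (u + z₁ + k • c) (u + k • c) ≤ (L' + L₁) * M := by linarith
      _ ≤ ((L₁ + L₂ : ℕ) + N) * M := by gcongr
  have hball₁ : closedBall u (L₁ * M) ⊆ A := by
    have hlen : (L₁ : ℝ) ≤ (L₁ + L₂ : ℕ) + N := by exact_mod_cast (by omega)
    refine (closedBall_subset_closedBall (mul_le_mul_of_nonneg_right hlen hM)).trans ?_
    simpa using hA 0 (Nat.zero_le m)
  have run₁ : Reaches E (Prod.snd ⁻¹' A) (p, u) (r, u + z₁) := h₁.reaches hE hball₁
  have run₂ : Reaches E (Prod.snd ⁻¹' A) (r, u + z₁) (r, u + z₁ + m • c) :=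
    hcyc.reaches_nsmul hE fun k hk => hball k hk.le K (by omega)
  have run₃ : Reaches E (Prod.snd ⁻¹' A) (r, u + z₁ + m • c) (q, u + z₁ + m • c + z₂) :=
    h₂.reaches hE (hball m le_rfl L₂ (by omega))
  rw [← add_assoc, add_right_comm (u + z₁)]
  exact (run₁.trans run₂).trans run₃

end Norm

/-- The order interval spanned by `w` and `w'`, enlarged by `e`. -/
def spannedBox {W : Type*} [Lattice W] [AddGroup W] (w w' e : W) : Set W :=
  Set.Icc (w ⊓ w' - e) (w ⊔ w' + e)

lemma mem_spannedBox_iff_forall {d : ℕ} {w w' e x : Vec d} :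
    x ∈ spannedBox w w' e ↔ ∀ i, x i ∈ spannedBox (w i) (w' i) (e i) :=
  forall_and.symm

lemma left_mem_spannedBox {d : ℕ} {w w' : Vec d} {a : ℕ} :
    w ∈ spannedBox w w' (a : Vec d) := by
  have ha : (0 : Vec d) ≤ a := Nat.cast_nonneg a
  exact ⟨(sub_le_self _ ha).trans inf_le_left, le_sup_left.trans (le_add_of_nonneg_right ha)⟩

lemma closedBall_subset_spannedBox {d : ℕ} {w w' x : Vec d} {a b : ℕ} {ρ : ℝ}
    (hx : x ∈ spannedBox w w' (a : Vec d)) (hρ : a + ρ ≤ b) :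
    Metric.closedBall x ρ ⊆ spannedBox w w' (b : Vec d) := by
  intro y hy
  rw [mem_spannedBox_iff_forall] at hx ⊢
  intro i
  have hnorm : ‖(y - x) i‖ ≤ ρ := (norm_le_pi_norm _ i).trans (mem_closedBall_iff_norm.1 hy)
  rw [Int.norm_eq_abs] at hnorm
  have hdist : a + |(y - x) i| ≤ b := by
    exact_mod_cast (by linarith : a + |(((y - x) i : ℤ) : ℝ)| ≤ b)
  obtain ⟨hlo, hhi⟩ := hx i
  obtain ⟨hlo', hhi'⟩ := abs_le.1 (le_refl |(y - x) i|)
  simp only [Pi.natCast_apply, Pi.sub_apply] at *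
  constructor <;> linarith

lemma mem_spannedBox_of_mul_eq {w w' x e N i t : ℤ} (hN : 0 < N) (hi : 0 ≤ i) (hiN : i ≤ N)
    (ht : |t| ≤ N * e) (h : N * x = (N - i) * w + i * w' - t) : x ∈ spannedBox w w' e := by
  obtain ⟨ht₁, ht₂⟩ := abs_le.1 ht
  have hlo : w ⊓ w' ≤ w ∧ w ⊓ w' ≤ w' := ⟨inf_le_left, inf_le_right⟩
  have hhi : w ≤ w ⊔ w' ∧ w' ≤ w ⊔ w' := ⟨le_sup_left, le_sup_right⟩
  constructor <;> refine le_of_mul_le_mul_left ?_ hN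
  · nlinarith [mul_le_mul_of_nonneg_left hlo.1 (sub_nonneg.2 hiN),
      mul_le_mul_of_nonneg_left hlo.2 hi]
  · nlinarith [mul_le_mul_of_nonneg_left hhi.1 (sub_nonneg.2 hiN),
      mul_le_mul_of_nonneg_left hhi.2 hi]

variable {w r y c B : ℤ} {N i m k : ℕ}

/-- The points `w + r + i * y + ⌊i * m / N⌋ * c` form a discretized segment from `w + r` to
`w + r + N * y + m * c`. -/
lemma discreteSegment_mem_spannedBox (hN : 0 < N) (hi : i ≤ N) (hr : |r| ≤ B) (hc : |c| ≤ B) :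
    w + r + i * y + (i * m / N : ℕ) * c ∈ spannedBox w (w + r + N * y + m * c) (2 * B) := by
  set ρ := i * m % N
  have hdiv : (N : ℤ) * (i * m / N : ℕ) + ρ = i * m := by
    exact_mod_cast Nat.div_add_mod (i * m) N
  have hρ : (ρ : ℤ) ≤ N := by exact_mod_cast (Nat.mod_lt _ hN).le
  have hiN : (i : ℤ) ≤ N := by exact_mod_cast hi
  refine mem_spannedBox_of_mul_eq (i := i) (t := ρ * c - (N - i) * r) (by exact_mod_cast hN)
    (Int.natCast_nonneg i) hiN ?_ (by linear_combination c * hdiv)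
  have hρc : |(ρ : ℤ) * c| ≤ N * B := by
    rw [abs_mul, Nat.abs_cast]
    gcongr
  have hir : |((N : ℤ) - i) * r| ≤ N * B := by
    rw [abs_mul, abs_of_nonneg (sub_nonneg.2 hiN)]
    gcongr
    linarith [Int.natCast_nonneg i]
  linarith [abs_sub (ρ * c) ((N - i) * r)]

lemma discreteSegment_add_mem_spannedBox (hi : i < N) (hr : |r| ≤ B) (hy : |y| ≤ B) (hc : |c| ≤ B)
    (hk : i * m / N + k ≤ (i + 1) * m / N) :
    w + r + i * y + (i * m / N : ℕ) * c + k * c ∈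
      spannedBox w (w + r + N * y + m * c) (3 * B) := by
  set q := i * m / N
  set q' := (i + 1) * m / N
  have hN : 0 < N := by omega
  have hstart := discreteSegment_mem_spannedBox (w := w) (y := y) (m := m) hN hi.le hr hc
  have hend := discreteSegment_mem_spannedBox (w := w) (y := y) (m := m) hN hi hr hc
  have hB : 0 ≤ B := (abs_nonneg r).trans hr
  obtain ⟨hy₁, hy₂⟩ := abs_le.1 hy
  have hbetween : w + r + i * y + q * c + k * c ∈
      Set.uIcc (w + r + i * y + q * c) (w + r + i * y + q' * c) := by
    have hk' : (q + k : ℤ) ≤ q' := by exact_mod_cast hk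
    have hk₀ : (0 : ℤ) ≤ k := Int.natCast_nonneg k
    rw [Set.mem_uIcc]
    rcases le_total 0 c with h | h
    · left; constructor <;> nlinarith [hk', hk₀]
    · right; constructor <;> nlinarith [hk', hk₀]
  refine Set.uIcc_subset_Icc ?_ ?_ hbetween
  · exact ⟨by linarith [hstart.1], by linarith [hstart.2]⟩
  · have hstep : w + r + (i + 1 : ℕ) * y + q' * c - y = w + r + i * y + q' * c := by
      push_cast; ring
    exact ⟨by linarith [hend.1], by linarith [hend.2]⟩

section Spread

variable {α : Type*} [DecidableEq α] {d M Λ K : ℕ} {E : α → Vec d → α → Prop} {p : α}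
  {Lr Ly : ℕ} {r y c w z : Vec d} {Sr Sy : Finset α}

/-- The copies of `c` are spread evenly over the copies of `y`, so that the run follows the segment
from `w` to its endpoint. -/
lemma reaches_spread (hE : ∀ p e q, E p e q → ‖e‖ ≤ M) (hr : Walk E p p r Lr Sr) (hLr : Lr ≤ Λ)
    (hy : Walk E p p y Ly Sy) (hLy : Ly ≤ Λ) (hc : IsCycleThrough E N Sy c) (hN : N ≤ Λ)
    {i : ℕ} (hi : i ≤ K + 1) :
    Reaches E (Prod.snd ⁻¹' spannedBox w (w + r + (K + 1) • y + m • c)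
      ((5 * (Λ * M) : ℕ) : Vec d)) (p, w) (p, w + r + i • y + (i * m / (K + 1)) • c) := by
  have hM : (0 : ℝ) ≤ M := M.cast_nonneg
  have hΛ : ∀ L ≤ Λ, (L * M : ℝ) ≤ (Λ * M : ℕ) :=
    fun L hL => by exact_mod_cast Nat.mul_le_mul_right M hL
  induction i with
  | zero =>
    rw [zero_nsmul, Nat.zero_mul, Nat.zero_div, zero_nsmul, add_zero, add_zero]
    refine hr.reaches hE (closedBall_subset_spannedBox (left_mem_spannedBox (a := 4 * (Λ * M))) ?_)
    have hr_len := hΛ Lr hLr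
    push_cast at *
    linarith
  | succ i ih =>
    refine (ih (by omega)).trans ?_
    have hr_norm := norm_le_natCast_iff.1 ((hr.norm_le hE).trans (hΛ Lr hLr))
    have hy_norm := norm_le_natCast_iff.1 ((hy.norm_le hE).trans (hΛ Ly hLy))
    have hc_norm := norm_le_natCast_iff.1 ((hc.norm_le hE hM).trans (hΛ N hN))
    obtain ⟨k, hk⟩ := Nat.exists_eq_add_of_le
      (Nat.div_le_div_right (c := K + 1) (Nat.mul_le_mul_right m (Nat.le_add_right i 1)))
    have hblock := hy.reaches_insert_nsmul hE hM hc (m := k)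
      (u := w + r + i • y + (i * m / (K + 1)) • c)
      (A := spannedBox w (w + r + (K + 1) • y + m • c) ((5 * (Λ * M) : ℕ) : Vec d)) <| by
        intro k' hk'
        refine closedBall_subset_spannedBox (a := 3 * (Λ * M)) ?_ ?_
        · refine mem_spannedBox_iff_forall.2 fun j => ?_
          simpa using discreteSegment_add_mem_spannedBox (w := w j) hi (hr_norm j) (hy_norm j)
            (hc_norm j) (hk ▸ Nat.add_le_add_left hk' _)
        · have hy_len := hΛ Ly hLy
          have hc_len := hΛ N hN
          push_cast at *
          linarith
    convert hblock using 2
    rw [hk, add_nsmul c, succ_nsmul]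
    abel

lemma HasSpreadForm.reaches (hE : ∀ p e q, E p e q → ‖e‖ ≤ M) (hN : N ≤ Λ)
    (h : HasSpreadForm E N Λ p z) :
    Reaches E (Prod.snd ⁻¹' spannedBox w (w + z) ((5 * (Λ * M) : ℕ) : Vec d))
      (p, w) (p, w + z) := by
  obtain ⟨r, Lr, Sr, y, Ly, Sy, c, K, m, hr, hLr, hy, hLy, hc, rfl⟩ := h
  have hw : w + (r + (K + 1) • y + m • c) = w + r + (K + 1) • y + m • c := by abel
  rw [hw]
  simpa using reaches_spread (m := m) hE hr hLr hy hLy hc hN le_rfl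

end Spread

end Runs

section BoundedGeneration

lemma exists_mem_abs_add_le {r : Multiset ℤ} {t B : ℤ} (hr : r ≠ 0) (hsum : t + r.sum = 0)
    (hB : ∀ x ∈ r, |x| ≤ B) (ht : |t| ≤ B) : ∃ x ∈ r, |t + x| ≤ B := by
  rw [abs_le] at ht
  rcases le_total 0 t with ht₀ | ht₀
  · obtain ⟨x, hx, hx₀⟩ : ∃ x ∈ r, x ≤ 0 := by
      by_contra! hpos
      have hsum_pos := Multiset.sum_lt_sum_of_nonempty (f := fun _ => (0 : ℤ)) (g := id) hr hpos
      simp only [Multiset.map_id, Multiset.map_const', Multiset.sum_replicate,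
        smul_zero] at hsum_pos
      omega
    have hxB := abs_le.1 (hB x hx)
    exact ⟨x, hx, abs_le.2 ⟨by omega, by omega⟩⟩
  · obtain ⟨x, hx, hx₀⟩ : ∃ x ∈ r, 0 ≤ x := by
      by_contra! hneg
      have hsum_neg := Multiset.sum_lt_sum_of_nonempty (f := id) (g := fun _ => (0 : ℤ)) hr hneg
      simp only [Multiset.map_id, Multiset.map_const', Multiset.sum_replicate,
        smul_zero] at hsum_neg
      omega
    have hxB := abs_le.1 (hB x hx)
    exact ⟨x, hx, abs_le.2 ⟨by omega, by omega⟩⟩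

section ZeroSum

variable {G : Type*} [AddCommGroup G] (φ : G →+ ℤ)

lemma exists_list_forall_prefix_abs_le {B : ℤ} (s : Multiset G) (hB : ∀ x ∈ s, |φ x| ≤ B) {t : ℤ}
    (ht : |t| ≤ B) (hs : t + φ s.sum = 0) :
    ∃ l : List G, l = s ∧ ∀ l', l' <+: l → |t + φ l'.sum| ≤ B := by
  classical
  induction hn : s.card generalizing s t with
  | zero =>
    rw [Multiset.card_eq_zero] at hn
    exact ⟨[], by simp [hn], fun l' hl' => by simpa [List.prefix_nil.1 hl'] using ht⟩
  | succ n ih =>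
    have hs₀ : s.map φ ≠ 0 := by
      rw [Ne, Multiset.map_eq_zero, ← Multiset.card_eq_zero]
      omega
    obtain ⟨_, hφx, htx⟩ := exists_mem_abs_add_le hs₀ (by rwa [← map_multiset_sum])
      (by simpa using hB) ht
    obtain ⟨x, hx, rfl⟩ := Multiset.mem_map.1 hφx
    obtain ⟨s, rfl⟩ := Multiset.exists_cons_of_mem hx
    obtain ⟨l, rfl, hl⟩ := ih s (fun y hy => hB y (Multiset.mem_cons_of_mem hy)) htx
      (by rw [← hs, Multiset.sum_cons, map_add, add_assoc]) (by simpa using hn)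
    refine ⟨x :: l, rfl, fun l' hl' => ?_⟩
    rcases List.prefix_cons_iff.1 hl' with rfl | ⟨l'', rfl, hl''⟩
    · simpa using ht
    · simpa [add_assoc] using hl l'' hl''

lemma exists_zero_sum_le {B : ℕ} {s : Multiset G} (hs : s ≠ 0) (hB : ∀ x ∈ s, |φ x| ≤ B)
    (hsum : φ s.sum = 0) : ∃ b ≤ s, b ≠ 0 ∧ b.card ≤ 2 * B + 1 ∧ φ b.sum = 0 := by
  by_cases hcard : s.card ≤ 2 * B + 1
  · exact ⟨s, le_rfl, hs, hcard, hsum⟩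
  obtain ⟨l, rfl, hl⟩ := exists_list_forall_prefix_abs_le φ s hB (t := 0) (by simp) (by simpa)
  rw [Multiset.coe_card] at hcard
  have hmaps : ∀ k ∈ Finset.range (2 * B + 2),
      φ (l.take k).sum ∈ Finset.Icc (-(B : ℤ)) B := fun k _ => by
    simpa [abs_le] using hl _ (List.take_prefix k l)
  obtain ⟨i, hi, j, hj, hij, heq⟩ := Finset.exists_ne_map_eq_of_card_lt_of_maps_to
    (by rw [Int.card_Icc, Finset.card_range]; omega) hmaps
  wlog hlt : i < j generalizing i j
  · exact this j hj i hi hij.symm heq.symm (by omega)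
  rw [Finset.mem_range] at hi hj
  refine ⟨((l.take j).drop i : List G), ?_, ?_, ?_, ?_⟩
  · exact ((List.drop_sublist i _).trans (List.take_sublist j l)).subperm
  · rw [Ne, Multiset.coe_eq_zero, ← List.length_eq_zero_iff, List.length_drop, List.length_take]
    omega
  · rw [Multiset.coe_card, List.length_drop, List.length_take]
    omega
  · have hsplit := (l.take j).sum_take_add_sum_drop i
    rw [List.take_take, min_eq_left hlt.le] at hsplit
    rw [← hsplit, map_add, left_eq_add] at heq
    exact heq

end ZeroSum

/-- `P` is generated, as a monoid, by its elements of norm at most `a`. -/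
def BoundedlyGenerated {G : Type*} [SeminormedAddCommGroup G] (P : AddSubmonoid G) (a : ℕ) : Prop :=
  P ≤ AddSubmonoid.closure {x | x ∈ P ∧ ‖x‖ ≤ a}

namespace BoundedlyGenerated

variable {G H : Type*} [SeminormedAddCommGroup G] [SeminormedAddCommGroup H]
  {P : AddSubmonoid G} {a b : ℕ}

lemma mono (h : BoundedlyGenerated P a) (hab : a ≤ b) : BoundedlyGenerated P b :=
  h.trans (AddSubmonoid.closure_mono fun _ hx => ⟨hx.1, hx.2.trans (by exact_mod_cast hab)⟩)

lemma exists_multiset (h : BoundedlyGenerated P a) {x : G} (hx : x ∈ P) :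
    ∃ s : Multiset G, (∀ y ∈ s, y ∈ P ∧ ‖y‖ ≤ a) ∧ s.sum = x :=
  AddSubmonoid.exists_multiset_of_mem_closure (h hx)

lemma map (h : BoundedlyGenerated P a) (f : G →+ H) (hf : ∀ x, ‖f x‖ ≤ b * ‖x‖) :
    BoundedlyGenerated (P.map f) (b * a) := by
  rintro _ ⟨x, hx, rfl⟩
  have hfx : f x ∈ (AddSubmonoid.closure {x | x ∈ P ∧ ‖x‖ ≤ a}).map f :=
    AddSubmonoid.mem_map_of_mem f (h hx)
  rw [AddMonoidHom.map_mclosure] at hfx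
  refine AddSubmonoid.closure_mono ?_ hfx
  rintro _ ⟨y, ⟨hyP, hya⟩, rfl⟩
  refine ⟨AddSubmonoid.mem_map_of_mem f hyP, (hf y).trans ?_⟩
  rw [Nat.cast_mul]
  gcongr

lemma prod (hP : BoundedlyGenerated P a) {R : AddSubmonoid H} (hR : BoundedlyGenerated R a) :
    BoundedlyGenerated (P.prod R) a := by
  have hP₀ : (0 : G) ∈ {x | x ∈ P ∧ ‖x‖ ≤ a} := ⟨P.zero_mem, by simp⟩
  have hR₀ : (0 : H) ∈ {x | x ∈ R ∧ ‖x‖ ≤ a} := ⟨R.zero_mem, by simp⟩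
  refine (AddSubmonoid.prod_mono hP hR).trans ?_
  rw [← AddSubmonoid.closure_prod hP₀ hR₀]
  refine AddSubmonoid.closure_mono fun x hx => ?_
  exact ⟨⟨hx.1.1, hx.2.1⟩, norm_prod_le_iff.2 ⟨hx.1.2, hx.2.2⟩⟩

/-- Pottier's bound for one equation: by the Steinitz reordering, a sum of generators on which `φ`
vanishes splits into zero-sum blocks of bounded length. -/
lemma inf_mker (hP : BoundedlyGenerated P a) (ha : 1 ≤ a) (hb : 1 ≤ b) (φ : G →+ ℤ)
    (hφ : ∀ x, ‖φ x‖ ≤ b * ‖x‖) :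
    BoundedlyGenerated (P ⊓ AddMonoidHom.mker φ) (3 * a ^ 2 * b) := by
  classical
  rintro x ⟨hx, hx₀⟩
  obtain ⟨s, hs, rfl⟩ := hP.exists_multiset hx
  rw [SetLike.mem_coe, AddMonoidHom.mem_mker] at hx₀
  have hφs : ∀ y ∈ s, |φ y| ≤ (b * a : ℕ) := fun y hy => by
    have hle := (hφ y).trans (mul_le_mul_of_nonneg_left (hs y hy).2 b.cast_nonneg)
    rw [Int.norm_eq_abs] at hle
    exact_mod_cast hle
  induction s using Multiset.strongInductionOn with
  | ih s ih =>
  rcases eq_or_ne s 0 with rfl | hne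
  · exact AddSubmonoid.zero_mem _
  obtain ⟨t, hts, ht, htcard, htsum⟩ := exists_zero_sum_le φ hne hφs hx₀
  obtain ⟨r, rfl⟩ := Multiset.le_iff_exists_add.1 hts
  have htP : ∀ y ∈ t, y ∈ P ∧ ‖y‖ ≤ a := fun y hy => hs y (Multiset.mem_add.2 (.inl hy))
  have hrP : ∀ y ∈ r, y ∈ P ∧ ‖y‖ ≤ a := fun y hy => hs y (Multiset.mem_add.2 (.inr hy))
  rw [Multiset.sum_add] at hx₀ ⊢
  refine add_mem (AddSubmonoid.subset_closure ⟨⟨?_, htsum⟩, ?_⟩)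
    (ih r (lt_add_of_pos_left r (pos_iff_ne_zero.2 ht)) hrP ?_ ?_ ?_)
  · exact P.multiset_sum_mem t fun y hy => (htP y hy).1
  · have hnorm : (t.map (‖·‖)).sum ≤ t.card • (a : ℝ) := by
      simpa using
        Multiset.sum_le_card_nsmul (t.map (‖·‖)) a (by simpa using fun y hy => (htP y hy).2)
    have hlen : t.card * a ≤ 3 * a ^ 2 * b := by nlinarith [Nat.mul_le_mul ha hb]
    rw [nsmul_eq_mul] at hnorm
    exact (norm_multiset_sum_le t).trans (hnorm.trans (by exact_mod_cast hlen))
  · exact P.multiset_sum_mem r fun y hy => (hrP y hy).1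
  · rwa [map_add, htsum, zero_add] at hx₀
  · exact fun y hy => hφs y (Multiset.mem_add.2 (.inr hy))

lemma inf_mker_vec {d : ℕ} (hP : BoundedlyGenerated P a) (ha : 1 ≤ a) (hb : 1 ≤ b) (φ : G →+ Vec d)
    (hφ : ∀ x, ‖φ x‖ ≤ b * ‖x‖) :
    BoundedlyGenerated (P ⊓ AddMonoidHom.mker φ) ((3 * a * b) ^ 2 ^ d) := by
  induction d generalizing P a with
  | zero =>
    have hker : AddMonoidHom.mker φ = ⊤ := eq_top_iff.2 fun x _ => Subsingleton.elim (φ x) 0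
    rw [hker, inf_top_eq]
    exact hP.mono (by simp only [pow_zero, pow_one]; nlinarith [Nat.mul_le_mul ha hb])
  | succ d ih =>
    let φ₀ : G →+ ℤ := (Pi.evalAddMonoidHom (fun _ => ℤ) 0).comp φ
    let φ₁ : G →+ Vec d :=
      (AddMonoidHom.mk' (fun z : Vec (d + 1) => Fin.tail z) fun _ _ => rfl).comp φ
    have hker : P ⊓ AddMonoidHom.mker φ = P ⊓ AddMonoidHom.mker φ₀ ⊓ AddMonoidHom.mker φ₁ := by
      ext x
      have hφx : φ x = 0 ↔ φ x 0 = 0 ∧ Fin.tail (φ x) = 0 := by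
        simp only [funext_iff, Fin.forall_fin_succ, Fin.tail, Pi.zero_apply]
      exact (and_congr_right' hφx).trans and_assoc.symm
    have hφ₁ : ∀ x, ‖φ₁ x‖ ≤ b * ‖x‖ := fun x =>
      (pi_norm_le_iff_of_nonneg (by positivity)).2 fun i =>
        (norm_le_pi_norm (φ x) i.succ).trans (hφ x)
    have hbound := ih (hP.inf_mker ha hb φ₀ fun x => (norm_le_pi_norm (φ x) 0).trans (hφ x))
      (Nat.mul_pos (by positivity) hb) φ₁ hφ₁
    rw [hker]
    convert hbound using 1
    rw [pow_succ', pow_mul]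
    ring
  
end BoundedlyGenerated

lemma boundedlyGenerated_nonneg_int : BoundedlyGenerated (AddSubmonoid.nonneg ℤ) 1 := by
  intro n hn
  obtain ⟨k, rfl⟩ := Int.eq_ofNat_of_zero_le (AddSubmonoid.mem_nonneg.1 hn)
  rw [← mul_one (k : ℤ), ← nsmul_eq_mul]
  refine AddSubmonoid.nsmul_mem _ (AddSubmonoid.mem_closure_of_mem ?_) k
  exact ⟨AddSubmonoid.mem_nonneg.2 zero_le_one, by simp⟩

lemma boundedlyGenerated_nonneg_vec (d : ℕ) :
    BoundedlyGenerated (AddSubmonoid.nonneg (Vec d)) 1 := by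
  intro w hw
  rw [← Finset.univ_sum_single w]
  refine sum_mem fun i _ => ?_
  obtain ⟨k, hk⟩ := Int.eq_ofNat_of_zero_le (hw i)
  have hsmul : Pi.single i (w i) = k • (Pi.single i 1 : Vec d) := by
    rw [← Pi.single_smul, nsmul_one, hk]
  rw [hsmul]
  refine AddSubmonoid.nsmul_mem _ (AddSubmonoid.mem_closure_of_mem ?_) k
  exact ⟨Pi.single_nonneg.2 zero_le_one, by simp [Pi.norm_single]⟩

lemma BoundedlyGenerated.nonneg_prod {G H : Type*} [SeminormedAddCommGroup G] [PartialOrder G]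
    [IsOrderedAddMonoid G] [SeminormedAddCommGroup H] [PartialOrder H] [IsOrderedAddMonoid H]
    {a : ℕ} (hG : BoundedlyGenerated (AddSubmonoid.nonneg G) a)
    (hH : BoundedlyGenerated (AddSubmonoid.nonneg H) a) :
    BoundedlyGenerated (AddSubmonoid.nonneg (G × H)) a :=
  hG.prod hH

end BoundedGeneration

section Profiles

/-- A run up to scaling: its source vector, target vector, scale and cost. Genuine runs are the
profiles of scale `1`; the cost controls the size of the box in which the run takes place. -/
abbrev Profile := Vec 2 × Vec 2 × ℤ × ℤ

/-- The source vector of a profile. -/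
def sourceHom : Profile →+ Vec 2 := AddMonoidHom.fst _ _

/-- The target vector of a profile. -/
def targetHom : Profile →+ Vec 2 := (AddMonoidHom.fst _ _).comp (AddMonoidHom.snd _ _)

/-- The scale of a profile. -/
def scaleHom : Profile →+ ℤ :=
  (AddMonoidHom.fst _ _).comp ((AddMonoidHom.snd _ _).comp (AddMonoidHom.snd _ _))

/-- The difference between the end of the first profile and the start of the second one. -/
def gapHom : Profile × Profile →+ Vec 2 :=
  AddMonoidHom.mk' (fun x => x.1.2.1 - x.2.1) fun _ _ => add_sub_add_comm ..

/-- The difference between the scales of two profiles. -/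
def scaleGapHom : Profile × Profile →+ ℤ :=
  AddMonoidHom.mk' (fun x => x.1.2.2.1 - x.2.2.2.1) fun _ _ => add_sub_add_comm ..

/-- The concatenation of two profiles, which is meaningful if they match and have the same scale. -/
def concatHom : Profile × Profile →+ Profile :=
  AddMonoidHom.mk' (fun x => (x.1.1, x.2.2.1, x.1.2.2.1, x.1.2.2.2 + x.2.2.2.2)) fun _ _ =>
    Prod.ext rfl (Prod.ext rfl (Prod.ext rfl (add_add_add_comm ..)))

/-- All concatenations of matching profiles from `P` and `R`. -/
def comp (P R : AddSubmonoid Profile) : AddSubmonoid Profile :=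
  (P.prod R ⊓ AddMonoidHom.mker gapHom ⊓ AddMonoidHom.mker scaleGapHom).map concatHom

variable {P R : AddSubmonoid Profile} {a B : ℕ}

lemma mem_comp {x : Profile} : x ∈ comp P R ↔ ∃ w t w' k l l',
    (w, t, k, l) ∈ P ∧ (t, w', k, l') ∈ R ∧ x = (w, w', k, l + l') := by
  constructor
  · rintro ⟨⟨⟨w, t, k, l⟩, ⟨t', w', k', l'⟩⟩, ⟨⟨⟨hP, hR⟩, hgap⟩, hscale⟩, rfl⟩
    obtain rfl : t = t' := sub_eq_zero.1 hgap
    obtain rfl : k = k' := sub_eq_zero.1 hscale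
    exact ⟨w, t, w', k, l, l', hP, hR, rfl⟩
  · rintro ⟨w, t, w', k, l, l', hP, hR, rfl⟩
    exact ⟨((w, t, k, l), (t, w', k, l')), ⟨⟨⟨hP, hR⟩, sub_self t⟩, sub_self k⟩, rfl⟩

lemma norm_profile_le_iff {x : Profile} {r : ℝ} :
    ‖x‖ ≤ r ↔ ‖x.1‖ ≤ r ∧ ‖x.2.1‖ ≤ r ∧ ‖x.2.2.1‖ ≤ r ∧ ‖x.2.2.2‖ ≤ r := by
  simp only [norm_prod_le_iff]

lemma norm_sourceHom_le (x : Profile) : ‖sourceHom x‖ ≤ ‖x‖ :=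
  (norm_profile_le_iff.1 le_rfl).1

lemma norm_targetHom_le (x : Profile) : ‖targetHom x‖ ≤ ‖x‖ :=
  (norm_profile_le_iff.1 le_rfl).2.1

lemma norm_gapHom_le (x : Profile × Profile) : ‖gapHom x‖ ≤ (2 : ℕ) * ‖x‖ := by
  have h₁ := (norm_profile_le_iff.1 (norm_fst_le x)).2.1
  have h₂ := (norm_profile_le_iff.1 (norm_snd_le x)).1
  calc ‖x.1.2.1 - x.2.1‖ ≤ ‖x.1.2.1‖ + ‖x.2.1‖ := norm_sub_le _ _
    _ ≤ (2 : ℕ) * ‖x‖ := by push_cast; linarith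

lemma norm_scaleGapHom_le (x : Profile × Profile) : ‖scaleGapHom x‖ ≤ (2 : ℕ) * ‖x‖ := by
  have h₁ := (norm_profile_le_iff.1 (norm_fst_le x)).2.2.1
  have h₂ := (norm_profile_le_iff.1 (norm_snd_le x)).2.2.1
  calc ‖x.1.2.2.1 - x.2.2.2.1‖ ≤ ‖x.1.2.2.1‖ + ‖x.2.2.2.1‖ := norm_sub_le _ _
    _ ≤ (2 : ℕ) * ‖x‖ := by push_cast; linarith

lemma norm_concatHom_le (x : Profile × Profile) : ‖concatHom x‖ ≤ (2 : ℕ) * ‖x‖ := by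
  obtain ⟨hsource, -, hscale, hcost⟩ := norm_profile_le_iff.1 (norm_fst_le x)
  obtain ⟨-, htarget, -, hcost'⟩ := norm_profile_le_iff.1 (norm_snd_le x)
  have hx : ‖x‖ ≤ (2 : ℕ) * ‖x‖ := by push_cast; linarith [norm_nonneg x]
  refine norm_profile_le_iff.2 ⟨hsource.trans hx, htarget.trans hx, hscale.trans hx, ?_⟩
  calc ‖x.1.2.2.2 + x.2.2.2.2‖ ≤ ‖x.1.2.2.2‖ + ‖x.2.2.2.2‖ := norm_add_le _ _
    _ ≤ (2 : ℕ) * ‖x‖ := by push_cast; linarith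

lemma BoundedlyGenerated.comp (hP : BoundedlyGenerated P a) (hR : BoundedlyGenerated R a)
    (ha : 2 ≤ a) : BoundedlyGenerated (comp P R) (a ^ 64) := by
  have hker := (((hP.prod hR).inf_mker_vec (by omega) one_le_two gapHom norm_gapHom_le).inf_mker
    (Nat.one_le_pow _ _ (by omega)) one_le_two scaleGapHom norm_scaleGapHom_le)
  refine (hker.map concatHom norm_concatHom_le).mono ?_
  calc 2 * (3 * ((3 * a * 2) ^ 2 ^ 2) ^ 2 * 2) = 20155392 * a ^ 8 := by ring
    _ ≤ 2 ^ 56 * a ^ 8 := by gcongr; norm_num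
    _ ≤ a ^ 56 * a ^ 8 := by gcongr
    _ = a ^ 64 := by ring

lemma exists_mem_map_eq_one {G : Type*} [AddCommGroup G] (φ : G →+ ℤ) {s : Multiset G}
    (hs : ∀ x ∈ s, 0 ≤ φ x) (hsum : φ s.sum = 1) : ∃ x ∈ s, φ x = 1 := by
  by_contra! hne
  rw [map_multiset_sum] at hsum
  have hzero : ∀ k ∈ s.map φ, k = 0 := Multiset.forall_mem_map_iff.2 fun x hx => by
    have hle := Multiset.single_le_sum (Multiset.forall_mem_map_iff.2 hs) _
      (Multiset.mem_map_of_mem φ hx)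
    have := hs x hx
    have := hne x hx
    omega
  rw [Multiset.sum_eq_zero hzero] at hsum
  exact zero_ne_one hsum

/-- The deviation of a profile from the multiple of `u` given by its scale, where `π` selects the
source or the target. -/
def deviationHom (π : Profile →+ Vec 2) (u : Vec 2) : Profile →+ Vec 2 :=
  AddMonoidHom.mk' (fun x => π x - x.2.2.1 • u) fun x y => by
    rw [map_add, Prod.snd_add, Prod.snd_add, Prod.fst_add, add_smul, add_sub_add_comm]

lemma norm_deviationHom_le {π : Profile →+ Vec 2} (hπ : ∀ x, ‖π x‖ ≤ ‖x‖) {u : Vec 2}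
    (hu : ‖u‖ ≤ B) (x : Profile) : ‖deviationHom π u x‖ ≤ (B + 1 : ℕ) * ‖x‖ := by
  have hk := (norm_profile_le_iff.1 (le_refl ‖x‖)).2.2.1
  calc ‖π x - x.2.2.1 • u‖ ≤ ‖π x‖ + ‖x.2.2.1 • u‖ := norm_sub_le _ _
    _ ≤ ‖π x‖ + ‖x.2.2.1‖ * ‖u‖ := by gcongr; exact norm_smul_le _ _
    _ ≤ ‖x‖ + ‖x‖ * B := by gcongr; exact hπ x
    _ = (B + 1 : ℕ) * ‖x‖ := by push_cast; ring

lemma BoundedlyGenerated.inf_mker_deviationHom (hP : BoundedlyGenerated P a) (ha : 1 ≤ a)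
    {π : Profile →+ Vec 2} (hπ : ∀ x, ‖π x‖ ≤ ‖x‖) {u : Vec 2} (hu : ‖u‖ ≤ B) :
    BoundedlyGenerated (P ⊓ AddMonoidHom.mker (deviationHom π u)) ((3 * a * (B + 1)) ^ 4) :=
  hP.inf_mker_vec ha (Nat.succ_pos B) _ (norm_deviationHom_le hπ hu)

lemma BoundedlyGenerated.exists_cost_le (hP : BoundedlyGenerated P a) (ha : 1 ≤ a)
    (hscale : ∀ x ∈ P, 0 ≤ x.2.2.1) {u v : Vec 2} (hu : ‖u‖ ≤ B) (hv : ‖v‖ ≤ B) {l : ℤ}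
    (h : (u, v, 1, l) ∈ P) :
    ∃ l' : ℤ, l' ≤ ((3 * a * (B + 1)) ^ 20 : ℕ) ∧ (u, v, 1, l') ∈ P := by
  have hker := (hP.inf_mker_deviationHom ha norm_sourceHom_le hu).inf_mker_deviationHom
    (Nat.one_le_pow _ _ (by positivity)) norm_targetHom_le hv
  have hmem : (u, v, 1, l) ∈ P ⊓ AddMonoidHom.mker (deviationHom sourceHom u) ⊓
      AddMonoidHom.mker (deviationHom targetHom v) := by
    refine ⟨⟨h, ?_⟩, ?_⟩ <;> simp [deviationHom, sourceHom, targetHom]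
  obtain ⟨s, hs, hsum⟩ := hker.exists_multiset hmem
  obtain ⟨⟨w, w', k, l'⟩, hx, hk⟩ := exists_mem_map_eq_one scaleHom
    (fun x hx => hscale x (hs x hx).1.1.1) (congrArg scaleHom hsum)
  obtain ⟨⟨⟨hxP, hw⟩, hw'⟩, hnorm⟩ := hs _ hx
  obtain rfl : k = 1 := hk
  obtain rfl : w = u := by simpa [deviationHom, sourceHom, sub_eq_zero] using hw
  obtain rfl : w' = v := by simpa [deviationHom, targetHom, sub_eq_zero] using hw'
  refine ⟨l', ?_, hxP⟩
  have hl' : |l'| ≤ ((3 * (3 * a * (B + 1)) ^ 4 * (B + 1)) ^ 4 : ℕ) := by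
    have hcost := (norm_profile_le_iff.1 hnorm).2.2.2
    rw [Int.norm_eq_abs] at hcost
    exact_mod_cast hcost
  have hbound : (3 * (3 * a * (B + 1)) ^ 4 * (B + 1)) ^ 4 ≤ (3 * a * (B + 1)) ^ 20 := by
    calc (3 * (3 * a * (B + 1)) ^ 4 * (B + 1)) ^ 4
        = (3 * 1 * (B + 1) * (3 * a * (B + 1)) ^ 4) ^ 4 := by ring
      _ ≤ (3 * a * (B + 1) * (3 * a * (B + 1)) ^ 4) ^ 4 := by gcongr
      _ = (3 * a * (B + 1)) ^ 20 := by ring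
  exact (le_abs_self l').trans (hl'.trans (by exact_mod_cast hbound))

end Profiles

section Certificates

variable {α : Type*} {E : α → Vec 2 → α → Prop} {P R : AddSubmonoid Profile} {p q r : α}
  {a B Δ : ℕ}

/-- The configurations whose counters are nonnegative and at most `R`. -/
def box {α : Type*} (R : ℤ) : Set (α × Vec 2) := Prod.snd ⁻¹' Set.Icc 0 fun _ => R

lemma box_mono {R R' : ℤ} (h : R ≤ R') : (box R : Set (α × Vec 2)) ⊆ box R' :=
  Set.preimage_mono (Set.Icc_subset_Icc_right fun _ => h)

/-- Every profile of scale `1` in `P` comes from a run from `p` to `q` in the box whose size is the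
cost of the profile plus `Δ`. -/
structure IsSound (E : α → Vec 2 → α → Prop) (Δ : ℕ) (P : AddSubmonoid Profile) (p q : α) :
    Prop where
  scale_nonneg : ∀ x ∈ P, 0 ≤ x.2.2.1
  cost_nonneg : ∀ x ∈ P, 0 ≤ x.2.2.2
  reaches : ∀ w w' l, (w, w', 1, l) ∈ P → Reaches E (box (l + Δ)) (p, w) (q, w')

lemma IsSound.comp (hP : IsSound E Δ P p r) (hR : IsSound E Δ R r q) :
    IsSound E Δ (comp P R) p q where
  scale_nonneg x hx := by
    obtain ⟨w, t, w', k, l, l', hxP, -, rfl⟩ := mem_comp.1 hx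
    exact hP.scale_nonneg (w, t, k, l) hxP
  cost_nonneg x hx := by
    obtain ⟨w, t, w', k, l, l', hxP, hxR, rfl⟩ := mem_comp.1 hx
    exact add_nonneg (hP.cost_nonneg _ hxP) (hR.cost_nonneg _ hxR)
  reaches w w' m hm := by
    obtain ⟨_, t, _, k, l, l', hxP, hxR, heq⟩ := mem_comp.1 hm
    simp only [Prod.mk.injEq] at heq
    obtain ⟨rfl, rfl, rfl, rfl⟩ := heq
    have hl : 0 ≤ l := hP.cost_nonneg _ hxP
    have hl' : 0 ≤ l' := hR.cost_nonneg _ hxR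
    exact ((hP.reaches _ _ _ hxP).mono (box_mono (by linarith))).trans
      ((hR.reaches _ _ _ hxR).mono (box_mono (by linarith)))

/-- `x'` is reached from `x`, as witnessed by a sound monoid of profiles whose generators have norm
at most `a`. -/
def Certified (E : α → Vec 2 → α → Prop) (a Δ : ℕ) (x x' : α × Vec 2) : Prop :=
  ∃ P, BoundedlyGenerated P a ∧ IsSound E Δ P x.1 x'.1 ∧ ∃ l, (x.2, x'.2, 1, l) ∈ P

lemma Certified.trans {x y z : α × Vec 2} (hxy : Certified E a Δ x y) (hyz : Certified E a Δ y z)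
    (ha : 2 ≤ a) : Certified E (a ^ 64) Δ x z := by
  obtain ⟨P, hP, hPs, l, hl⟩ := hxy
  obtain ⟨R, hR, hRs, l', hl'⟩ := hyz
  exact ⟨comp P R, hP.comp hR ha, hPs.comp hRs, l + l',
    mem_comp.2 ⟨_, _, _, _, _, _, hl, hl', rfl⟩⟩

lemma Certified.reaches {x x' : α × Vec 2} (h : Certified E a Δ x x') (ha : 1 ≤ a)
    (hx : ‖x.2‖ ≤ B) (hx' : ‖x'.2‖ ≤ B) :
    Reaches E (box ((3 * a * (B + 1)) ^ 20 + Δ : ℕ)) x x' := by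
  obtain ⟨P, hP, hsound, l, hl⟩ := h
  obtain ⟨l', hl', hmem⟩ := hP.exists_cost_le ha hsound.scale_nonneg hx hx' hl
  exact (hsound.reaches _ _ _ hmem).mono (box_mono (by push_cast at *; linarith))

section Piece

/-- The parameters of a piece: the excesses of source and target over the thresholds, the scale, and
the multiplicities of the two cycles. -/
abbrev PieceParam := Vec 2 × Vec 2 × ℤ × ℤ × ℤ

lemma boundedlyGenerated_nonneg_pieceParam :
    BoundedlyGenerated (AddSubmonoid.nonneg PieceParam) 1 :=
  (boundedlyGenerated_nonneg_vec 2).nonneg_prod <| (boundedlyGenerated_nonneg_vec 2).nonneg_prod <|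
    boundedlyGenerated_nonneg_int.nonneg_prod <|
      boundedlyGenerated_nonneg_int.nonneg_prod boundedlyGenerated_nonneg_int

lemma norm_pieceParam_le_iff {x : PieceParam} {ρ : ℝ} : ‖x‖ ≤ ρ ↔
    ‖x.1‖ ≤ ρ ∧ ‖x.2.1‖ ≤ ρ ∧ ‖x.2.2.1‖ ≤ ρ ∧ ‖x.2.2.2.1‖ ≤ ρ ∧ ‖x.2.2.2.2‖ ≤ ρ := by
  simp only [norm_prod_le_iff]

variable (θ θ' β c d : Vec 2)

/-- The defect of the equation `w' = w + k • β + K • c + m • d`, where `w = s + k • θ` and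
`w' = s' + k • θ'`, as a function of `(s, s', k, K, m)`. -/
def pieceDefectHom : PieceParam →+ Vec 2 :=
  AddMonoidHom.mk' (fun x => x.2.1 - x.1 + x.2.2.1 • (θ' - θ - β) - x.2.2.2.1 • c - x.2.2.2.2 • d)
    fun x y => by simp only [Prod.fst_add, Prod.snd_add, add_smul]; abel

/-- The profile of the run with the given parameters. Its cost is the sum of all counters at its
source and its target. -/
def pieceProfileHom : PieceParam →+ Profile :=
  AddMonoidHom.mk' (fun x => (x.1 + x.2.2.1 • θ, x.2.1 + x.2.2.1 • θ', x.2.2.1,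
    ∑ i, (x.1 + x.2.2.1 • θ) i + ∑ i, (x.2.1 + x.2.2.1 • θ') i)) fun x y => by
      simp only [Prod.fst_add, Prod.snd_add, add_smul, Prod.mk_add_mk, Pi.add_apply,
        Finset.sum_add_distrib, Prod.mk.injEq]
      exact ⟨by abel, by abel, trivial, by abel⟩

/-- The profiles of the runs from `w ≥ θ` to `w' ≥ θ'` with displacement of the form
`β + K • c + m • d`, closed under scaling. -/
noncomputable def piece : AddSubmonoid Profile :=
  (AddSubmonoid.nonneg PieceParam ⊓ AddMonoidHom.mker (pieceDefectHom θ θ' β c d)).map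
    (pieceProfileHom θ θ')

variable {θ θ' β c d}

lemma mem_piece {x : Profile} : x ∈ piece θ θ' β c d ↔ ∃ w w' : Vec 2, ∃ k K m : ℤ,
    0 ≤ k ∧ 0 ≤ K ∧ 0 ≤ m ∧ k • θ ≤ w ∧ k • θ' ≤ w' ∧ w' = w + k • β + K • c + m • d ∧
      x = (w, w', k, ∑ i, w i + ∑ i, w' i) := by
  constructor
  · rintro ⟨⟨s, s', k, K, m⟩, ⟨⟨hs, hs', hk, hK, hm⟩, hdefect⟩, rfl⟩
    refine ⟨s + k • θ, s' + k • θ', k, K, m, hk, hK, hm, le_add_of_nonneg_left hs,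
      le_add_of_nonneg_left hs', ?_, rfl⟩
    have hdefect : s' - s + k • (θ' - θ - β) - K • c - m • d = 0 := hdefect
    rw [← sub_eq_zero, ← hdefect]
    simp only [smul_sub]
    abel
  · rintro ⟨w, w', k, K, m, hk, hK, hm, hw, hw', heq, rfl⟩
    refine ⟨(w - k • θ, w' - k • θ', k, K, m),
      ⟨⟨sub_nonneg.2 hw, sub_nonneg.2 hw', hk, hK, hm⟩, ?_⟩, ?_⟩
    · change w' - k • θ' - (w - k • θ) + k • (θ' - θ - β) - K • c - m • d = 0
      rw [heq]
      simp only [smul_sub]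
      abel
    · simp [pieceProfileHom]

lemma norm_add_smul_le {s : Vec 2} {k : ℤ} {ρ : ℝ} (hs : ‖s‖ ≤ ρ) (hk : ‖k‖ ≤ ρ) (hθ : ‖θ‖ ≤ B) :
    ‖s + k • θ‖ ≤ (1 + B) * ρ :=
  calc ‖s + k • θ‖ ≤ ‖s‖ + ‖k‖ * ‖θ‖ := (norm_add_le _ _).trans (by gcongr; exact norm_smul_le _ _)
    _ ≤ ρ + ρ * B := by gcongr; exact (norm_nonneg s).trans hs
    _ = (1 + B) * ρ := by ring

lemma norm_sum_le_two_mul_norm (w : Vec 2) : ‖∑ i, w i‖ ≤ 2 * ‖w‖ := by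
  rw [Fin.sum_univ_two]
  linarith [norm_add_le (w 0) (w 1), norm_le_pi_norm w 0, norm_le_pi_norm w 1]

/-- The size of the generators of a piece whose data have norm at most `B`. -/
def pieceBound (B : ℕ) : ℕ := 8 * B * (21 * B) ^ 4

lemma norm_pieceDefectHom_le (hB : 1 ≤ B) (hθ : ‖θ‖ ≤ B) (hθ' : ‖θ'‖ ≤ B) (hβ : ‖β‖ ≤ B)
    (hc : ‖c‖ ≤ B) (hd : ‖d‖ ≤ B) (x : PieceParam) :
    ‖pieceDefectHom θ θ' β c d x‖ ≤ (7 * B : ℕ) * ‖x‖ := by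
  obtain ⟨hs, hs', hk, hK, hm⟩ := norm_pieceParam_le_iff.1 (le_refl ‖x‖)
  have hB' : (1 : ℝ) ≤ B := by exact_mod_cast hB
  have hγ : ‖θ' - θ - β‖ ≤ 3 * B := by
    linarith [norm_sub_le (θ' - θ) β, norm_sub_le θ' θ]
  calc ‖x.2.1 - x.1 + x.2.2.1 • (θ' - θ - β) - x.2.2.2.1 • c - x.2.2.2.2 • d‖
      ≤ ‖x.2.1‖ + ‖x.1‖ + ‖x.2.2.1 • (θ' - θ - β)‖ + ‖x.2.2.2.1 • c‖ + ‖x.2.2.2.2 • d‖ :=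
        (norm_sub_le _ _).trans (by gcongr; exact (norm_sub_le _ _).trans (by
          gcongr; exact (norm_add_le _ _).trans (by gcongr; exact norm_sub_le _ _)))
    _ ≤ ‖x.2.1‖ + ‖x.1‖ + ‖x.2.2.1‖ * ‖θ' - θ - β‖ + ‖x.2.2.2.1‖ * ‖c‖ + ‖x.2.2.2.2‖ * ‖d‖ := by
        gcongr <;> exact norm_smul_le _ _
    _ ≤ ‖x‖ + ‖x‖ + ‖x‖ * (3 * B) + ‖x‖ * B + ‖x‖ * B := by gcongr
    _ ≤ (7 * B : ℕ) * ‖x‖ := by push_cast; nlinarith [norm_nonneg x]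

lemma norm_pieceProfileHom_le (hB : 1 ≤ B) (hθ : ‖θ‖ ≤ B) (hθ' : ‖θ'‖ ≤ B) (x : PieceParam) :
    ‖pieceProfileHom θ θ' x‖ ≤ (8 * B : ℕ) * ‖x‖ := by
  obtain ⟨hs, hs', hk, -, -⟩ := norm_pieceParam_le_iff.1 (le_refl ‖x‖)
  have hw := norm_add_smul_le hs hk hθ
  have hw' := norm_add_smul_le hs' hk hθ'
  have hB' : ‖x‖ ≤ B * ‖x‖ := le_mul_of_one_le_left (norm_nonneg x) (by exact_mod_cast hB)
  have hsum := norm_sum_le_two_mul_norm (x.1 + x.2.2.1 • θ)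
  have hsum' := norm_sum_le_two_mul_norm (x.2.1 + x.2.2.1 • θ')
  push_cast
  refine norm_profile_le_iff.2 ⟨hw.trans ?_, hw'.trans ?_, hk.trans ?_,
    (norm_add_le _ _).trans ((add_le_add hsum hsum').trans ?_)⟩ <;> linarith [norm_nonneg x]

lemma boundedlyGenerated_piece (hB : 1 ≤ B) (hθ : ‖θ‖ ≤ B) (hθ' : ‖θ'‖ ≤ B) (hβ : ‖β‖ ≤ B)
    (hc : ‖c‖ ≤ B) (hd : ‖d‖ ≤ B) :
    BoundedlyGenerated (piece θ θ' β c d) (pieceBound B) := by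
  have hker := boundedlyGenerated_nonneg_pieceParam.inf_mker_vec le_rfl (by omega)
    (pieceDefectHom θ θ' β c d) (norm_pieceDefectHom_le hB hθ hθ' hβ hc hd)
  refine (hker.map (pieceProfileHom θ θ') (norm_pieceProfileHom_le hB hθ hθ')).mono (le_of_eq ?_)
  rw [pieceBound]
  ring

lemma isSound_piece (hθ : 0 ≤ θ) (hθ' : 0 ≤ θ')
    (hrun : ∀ (w w' : Vec 2) (K m : ℕ), θ ≤ w → θ' ≤ w' → w' = w + β + K • c + m • d →
      Reaches E (box (∑ i, w i + ∑ i, w' i + Δ)) (p, w) (q, w')) :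
    IsSound E Δ (piece θ θ' β c d) p q where
  scale_nonneg x hx := by
    obtain ⟨w, w', k, K, m, hk, -, -, -, -, -, rfl⟩ := mem_piece.1 hx
    exact hk
  cost_nonneg x hx := by
    obtain ⟨w, w', k, K, m, hk, -, -, hw, hw', -, rfl⟩ := mem_piece.1 hx
    have hw₀ : 0 ≤ w := (smul_nonneg hk hθ).trans hw
    have hw'₀ : 0 ≤ w' := (smul_nonneg hk hθ').trans hw'
    exact add_nonneg (Finset.sum_nonneg fun i _ => hw₀ i) (Finset.sum_nonneg fun i _ => hw'₀ i)
  reaches w w' l hl := by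
    obtain ⟨_, _, _, K, m, -, hK, hm, hw, hw', heq, hx⟩ := mem_piece.1 hl
    simp only [Prod.mk.injEq] at hx
    obtain ⟨rfl, rfl, rfl, rfl⟩ := hx
    lift K to ℕ using hK
    lift m to ℕ using hm
    simp only [one_smul, natCast_zsmul] at hw hw' heq
    exact hrun w w' K m hw hw' heq

lemma certified_of_piece (hB : 1 ≤ B) (hθ : ‖θ‖ ≤ B) (hθ' : ‖θ'‖ ≤ B) (hβ : ‖β‖ ≤ B) (hc : ‖c‖ ≤ B)
    (hd : ‖d‖ ≤ B) (hθ₀ : 0 ≤ θ) (hθ'₀ : 0 ≤ θ')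
    (hrun : ∀ (w w' : Vec 2) (K m : ℕ), θ ≤ w → θ' ≤ w' → w' = w + β + K • c + m • d →
      Reaches E (box (∑ i, w i + ∑ i, w' i + Δ)) (p, w) (q, w'))
    {u u' : Vec 2} {K m : ℕ} (hu : θ ≤ u) (hu' : θ' ≤ u') (h : u' = u + β + K • c + m • d) :
    Certified E (pieceBound B) Δ (p, u) (q, u') :=
  ⟨piece θ θ' β c d, boundedlyGenerated_piece hB hθ hθ' hβ hc hd, isSound_piece hθ₀ hθ'₀ hrun, _,
    mem_piece.2 ⟨u, u', 1, K, m, zero_le_one, K.cast_nonneg, m.cast_nonneg, by rwa [one_smul],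
      by rwa [one_smul], by simpa using h, rfl⟩⟩

end Piece

end Certificates

section BasicPieces

variable {α : Type*} {E : α → Vec 2 → α → Prop} {p q : α} {w w' : Vec 2} {B Δ : ℕ}

lemma add_le_sum_add_sum_add (hw : 0 ≤ w) (hw' : 0 ≤ w') {b : ℕ} (hb : b ≤ Δ) (i : Fin 2) :
    w i + b ≤ ∑ j, w j + ∑ j, w' j + Δ ∧ w' i + b ≤ ∑ j, w j + ∑ j, w' j + Δ := by
  have hwi := Finset.single_le_sum (fun j _ => hw j) (Finset.mem_univ i)
  have hwi' := Finset.single_le_sum (fun j _ => hw' j) (Finset.mem_univ i)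
  have hsum : 0 ≤ ∑ j, w j := Finset.sum_nonneg fun j _ => hw j
  have hsum' : 0 ≤ ∑ j, w' j := Finset.sum_nonneg fun j _ => hw' j
  constructor <;> omega

lemma certified_refl (hB : 1 ≤ B) (hw : 0 ≤ w) : Certified E (pieceBound B) Δ (p, w) (p, w) := by
  have h₀ : ‖(0 : Vec 2)‖ ≤ B := by simp
  refine certified_of_piece (θ := 0) (θ' := 0) (β := 0) (c := 0) (d := 0) (K := 0) (m := 0) hB
    h₀ h₀ h₀ h₀ h₀ le_rfl le_rfl ?_ hw hw (by simp)
  intro u u' K m _ _ hu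
  obtain rfl : u' = u := by simpa using hu
  exact Relation.ReflTransGen.refl

lemma certified_of_step {A : Set (α × Vec 2)} (hA : ∀ x ∈ A, 0 ≤ x.2) (hB : 1 ≤ B)
    (hE : ∀ p e q, E p e q → ‖e‖ ≤ B) {x x' : α × Vec 2} (h : Step E A x x') :
    Certified E (pieceBound B) Δ x x' := by
  obtain ⟨e, he, heq, hx, hx'⟩ := h
  have h₀ : ‖(0 : Vec 2)‖ ≤ B := by simp
  refine certified_of_piece (θ := 0) (θ' := 0) (β := e) (c := 0) (d := 0) (K := 0) (m := 0) hB
    h₀ h₀ (hE _ _ _ he) h₀ h₀ le_rfl le_rfl ?_ (hA _ hx) (hA _ hx') (by simpa using heq)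
  intro u u' K m hu hu' hstep
  have hle := add_le_sum_add_sum_add hu hu' (Nat.zero_le Δ)
  simp only [Nat.cast_zero, add_zero] at hle
  exact .single ⟨e, he, by simpa using hstep, ⟨hu, fun i => (hle i).1⟩, ⟨hu', fun i => (hle i).2⟩⟩

lemma spannedBox_subset_Icc {d b : ℕ} {w w' : Vec d} (hw : (b : Vec d) ≤ w) (hw' : (b : Vec d) ≤ w')
    {R : ℤ} (hR : ∀ i, w i + b ≤ R) (hR' : ∀ i, w' i + b ≤ R) :
    spannedBox w w' (b : Vec d) ⊆ Set.Icc 0 fun _ => R := by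
  refine Set.Icc_subset_Icc (sub_nonneg.2 (le_inf hw hw')) fun i => ?_
  rw [Pi.add_apply, Pi.sup_apply, ← max_add_add_right]
  exact max_le (hR i) (hR' i)

end BasicPieces

section Interior

variable {α : Type*} [DecidableEq α] {E : α → Vec 2 → α → Prop} {p : α} {w z : Vec 2}
  {M N Λ D B : ℕ}

lemma norm_natCast_vec_le (d a : ℕ) : ‖(a : Vec d)‖ ≤ a :=
  norm_le_natCast_iff.2 fun _ => by simp

lemma certified_of_hasSpreadForm (hE : ∀ p e q, E p e q → ‖e‖ ≤ M) (hN : N ≤ Λ)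
    (hD : 5 * (Λ * M) ≤ D) (hDB : D ≤ B) (hB : 1 ≤ B) (h : HasSpreadForm E N Λ p z)
    (hw : (D : Vec 2) ≤ w) (hw' : (D : Vec 2) ≤ w + z) :
    Certified E (pieceBound B) B (p, w) (p, w + z) := by
  obtain ⟨r, Lr, Sr, y, Ly, Sy, c, K, m, hr, hLr, hy, hLy, hc, rfl⟩ := h
  have hbound : ∀ {L : ℕ} {x : Vec 2}, ‖x‖ ≤ L * M → L ≤ Λ → 5 * ‖x‖ ≤ B := by
    intro L x hx hL
    have : (5 * (L * M) : ℝ) ≤ B := by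
      exact_mod_cast (Nat.mul_le_mul_left 5 (Nat.mul_le_mul_right M hL)).trans (hD.trans hDB)
    linarith
  have hr_norm := hbound (hr.norm_le hE) hLr
  have hy_norm := hbound (hy.norm_le hE) hLy
  have hc_norm := hbound (hc.norm_le hE M.cast_nonneg) hN
  have hD_norm : ‖(D : Vec 2)‖ ≤ B := (norm_natCast_vec_le 2 D).trans (by exact_mod_cast hDB)
  refine certified_of_piece (θ := D) (θ' := D) (β := r + y) (c := y) (d := c) (K := K) (m := m) hB
    hD_norm hD_norm (by linarith [norm_add_le r y, norm_nonneg r]) (by linarith [norm_nonneg y])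
    (by linarith [norm_nonneg c]) (Nat.cast_nonneg D) (Nat.cast_nonneg D) ?_ hw hw'
    (by rw [succ_nsmul]; abel)
  intro u u' K m hu hu' hz
  obtain rfl : u' = u + (r + (K + 1) • y + m • c) := by rw [hz, succ_nsmul]; abel
  have hDu : ((5 * (Λ * M) : ℕ) : Vec 2) ≤ (D : Vec 2) := Nat.mono_cast hD
  have hD₀ : (0 : Vec 2) ≤ D := Nat.cast_nonneg D
  have hle := add_le_sum_add_sum_add (hD₀.trans hu) (hD₀.trans hu') (hD.trans hDB)
  exact (HasSpreadForm.reaches hE hN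
    ⟨r, Lr, Sr, y, Ly, Sy, c, K, m, hr, hLr, hy, hLy, hc, rfl⟩).mono (Set.preimage_mono
      (spannedBox_subset_Icc (hDu.trans hu) (hDu.trans hu') (fun i => (hle i).1)
        fun i => (hle i).2))

end Interior

section Strip

variable {α : Type*}

lemma add_nsmul_mem_spannedBox {d m k : ℕ} {w c : Vec d} (hk : k ≤ m) :
    w + k • c ∈ spannedBox w (w + m • c) 0 := by
  refine mem_spannedBox_iff_forall.2 fun i => ?_
  have hk' : (k : ℤ) ≤ m := by exact_mod_cast hk
  have hk₀ : (0 : ℤ) ≤ k := Int.natCast_nonneg k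
  simp only [spannedBox, Set.mem_Icc, Pi.add_apply, Pi.zero_apply, sub_zero, add_zero,
    nsmul_eq_mul, Pi.mul_apply, Pi.natCast_apply]
  rcases le_total 0 (c i) with hc | hc
  · exact ⟨inf_le_left.trans (by nlinarith [hk₀]), le_sup_of_le_right (by nlinarith [hk'])⟩
  · exact ⟨inf_le_right.trans (by nlinarith [hk']), le_sup_of_le_left (by nlinarith [hk₀])⟩

lemma Walk.reaches_insert_nsmul_spannedBox [DecidableEq α] {d M N Λ L m : ℕ}
    {E : α → Vec d → α → Prop} {p q : α} {w r c : Vec d} {S : Finset α}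
    (hE : ∀ p e q, E p e q → ‖e‖ ≤ M) (hr : Walk E p q r L S) (hL : L ≤ Λ)
    (hc : IsCycleThrough E N S c) (hN : N ≤ Λ) :
    Reaches E (Prod.snd ⁻¹' spannedBox w (w + r + m • c) ((3 * (Λ * M) : ℕ) : Vec d))
      (p, w) (q, w + r + m • c) := by
  have hM : (0 : ℝ) ≤ M := M.cast_nonneg
  have hlen : ∀ K ≤ Λ, (K * M : ℝ) ≤ (Λ * M : ℕ) :=
    fun K hK => by exact_mod_cast Nat.mul_le_mul_right M hK
  have hr_norm := norm_le_natCast_iff.1 ((hr.norm_le hE).trans (hlen L hL))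
  refine hr.reaches_insert_nsmul hE hM hc fun k hk =>
    closedBall_subset_spannedBox (a := Λ * M) (mem_spannedBox_iff_forall.2 fun i => ?_) ?_
  · have hmem := mem_spannedBox_iff_forall.1 (add_nsmul_mem_spannedBox (w := w) (c := c) hk) i
    have hri := abs_le.1 (hr_norm i)
    simp only [spannedBox, Set.mem_Icc, Pi.add_apply, Pi.smul_apply, Pi.zero_apply,
      Pi.natCast_apply] at hmem ⊢
    constructor <;> omega
  · have := hlen L hL
    have := hlen N hN
    push_cast at *
    linarith

/-- The vector with `i`-th coordinate `x` and remaining coordinates `y`. -/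
def atWall {d : ℕ} (i : Fin (d + 1)) (x : ℤ) (y : Vec d) : Vec (d + 1) := i.insertNth x y

section AtWall

variable {d : ℕ} {i : Fin (d + 1)} {x x' : ℤ} {y y' : Vec d} {w : Vec (d + 1)}

lemma atWall_removeNth : atWall i (w i) (i.removeNth w) = w := Fin.insertNth_self_removeNth i w

lemma atWall_add_atWall : atWall i x y + atWall i x' y' = atWall i (x + x') (y + y') :=
  Fin.eq_insertNth_iff.2 ⟨by simp [atWall], by funext j; simp [atWall, Fin.removeNth]⟩

lemma nsmul_atWall_zero (m : ℕ) : m • atWall i 0 y = atWall i 0 (m • y) := by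
  induction m with
  | zero => simp only [zero_nsmul, atWall, Fin.insertNth_zero_right, Pi.single_zero]
  | succ m ih => rw [succ_nsmul, ih, atWall_add_atWall, add_zero, succ_nsmul]

lemma atWall_le_iff : atWall i x y ≤ w ↔ x ≤ w i ∧ y ≤ i.removeNth w := Fin.insertNth_le_iff

lemma le_atWall_iff : w ≤ atWall i x y ↔ w i ≤ x ∧ i.removeNth w ≤ y := Fin.le_insertNth_iff

lemma norm_atWall_le_iff {a : ℕ} : ‖atWall i x y‖ ≤ a ↔ |x| ≤ a ∧ ‖y‖ ≤ a := by
  simp only [norm_le_natCast_iff, Fin.forall_iff_succAbove i, atWall, Fin.insertNth_apply_same,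
    Fin.insertNth_apply_succAbove]

end AtWall

/-- The edges of the `d`-dimensional graph obtained by storing the `i`-th counter, as long as it
lies in `[0, D)`, in the state. -/
def StripEdge {d : ℕ} (E : α → Vec (d + 1) → α → Prop) (i : Fin (d + 1)) (D : ℕ) (x : α × ℤ)
    (e : Vec d) (x' : α × ℤ) : Prop :=
  E x.1 (atWall i (x'.2 - x.2) e) x'.1 ∧ x.2 ∈ Set.Ico (0 : ℤ) D ∧ x'.2 ∈ Set.Ico (0 : ℤ) D

section StripEdge

variable {d D M : ℕ} {E : α → Vec (d + 1) → α → Prop} {i : Fin (d + 1)} {Q : Finset α}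

lemma StripEdge.norm_le (hE : ∀ p e q, E p e q → ‖e‖ ≤ M) (x : α × ℤ) (e : Vec d) (x' : α × ℤ)
    (h : StripEdge E i D x e x') : ‖e‖ ≤ M :=
  (norm_atWall_le_iff.1 (hE _ _ _ h.1)).2

lemma StripEdge.target_mem (hQ : ∀ p e q, E p e q → q ∈ Q) (x : α × ℤ) (e : Vec d) (x' : α × ℤ)
    (h : StripEdge E i D x e x') : x' ∈ Q ×ˢ Finset.Ico (0 : ℤ) D :=
  Finset.mem_product.2 ⟨hQ _ _ _ h.1, Finset.mem_Ico.2 h.2.2⟩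

lemma Reaches.stripEdge {A : Set (α × Vec (d + 1))} (hA : ∀ x ∈ A, x.2 i ∈ Set.Ico (0 : ℤ) D)
    {x x' : α × Vec (d + 1)} (h : Reaches E A x x') :
    Reaches (StripEdge E i D) Set.univ ((x.1, x.2 i), i.removeNth x.2)
      ((x'.1, x'.2 i), i.removeNth x'.2) := by
  refine Relation.ReflTransGen.lift
    (fun y : α × Vec (d + 1) => ((y.1, y.2 i), i.removeNth y.2)) ?_ _ _ h
  rintro y y' ⟨e, he, heq, hy, hy'⟩
  refine ⟨i.removeNth e, ⟨?_, hA _ hy, hA _ hy'⟩, ?_, trivial, trivial⟩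
  · have hei : y'.2 i - y.2 i = e i := by simp [heq]
    rwa [hei, atWall_removeNth]
  · exact congrArg i.removeNth heq

lemma Reaches.of_stripEdge {A : Set (Vec d)} {A' : Set (α × Vec (d + 1))} {t : ℤ}
    (hA : ∀ p, ∀ ξ ∈ Set.Ico (0 : ℤ) D, ∀ η ∈ A, (p, atWall i (ξ + t) η) ∈ A')
    {x x' : (α × ℤ) × Vec d} (h : Reaches (StripEdge E i D) (Prod.snd ⁻¹' A) x x') :
    Reaches E A' (x.1.1, atWall i (x.1.2 + t) x.2) (x'.1.1, atWall i (x'.1.2 + t) x'.2) := by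
  refine Relation.ReflTransGen.lift
    (fun y : (α × ℤ) × Vec d => (y.1.1, atWall i (y.1.2 + t) y.2)) ?_ _ _ h
  rintro y y' ⟨e, ⟨he, hy, hy'⟩, heq, hyA, hyA'⟩
  refine ⟨_, he, ?_, hA _ _ hy _ hyA, hA _ _ hy' _ hyA'⟩
  simp only [heq, atWall_add_atWall]
  congr 1
  ring

lemma Reaches.exists_walk [DecidableEq α] {W : Type*} [AddCommMonoid W] {E : α → W → α → Prop}
    {A : Set (α × W)} {x x' : α × W} (h : Reaches E A x x') :
    ∃ z L S, Walk E x.1 x'.1 z L S ∧ x'.2 = x.2 + z := by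
  induction h with
  | refl => exact ⟨0, 0, _, .nil _, (add_zero _).symm⟩
  | tail _ hstep ih =>
    obtain ⟨z, L, S, hz, hxz⟩ := ih
    obtain ⟨e, he, heq, -, -⟩ := hstep
    exact ⟨z + e, L + 1, _, hz.snoc he, by rw [heq, hxz, add_assoc]⟩

end StripEdge

section StripPiece

variable {E : α → Vec 2 → α → Prop} {i : Fin 2} {M D B : ℕ}

lemma reaches_of_strip_normalForm [DecidableEq α] {p q : α} {x x' : ℤ} {r c : Vec 1} {N Λ L m : ℕ}
    {S : Finset (α × ℤ)} (hE : ∀ p e q, E p e q → ‖e‖ ≤ M) (hDB : D ≤ B) (hB : 3 * (Λ * M) ≤ B)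
    (hr : Walk (StripEdge E i D) (p, x) (q, x') r L S) (hL : L ≤ Λ)
    (hc : IsCycleThrough (StripEdge E i D) N S c) (hN : N ≤ Λ) (hx : 0 ≤ x) (hx' : 0 ≤ x')
    {w w' : Vec 2} (hw : atWall i x B ≤ w) (hw' : atWall i x' B ≤ w')
    (h : w' = w + atWall i (x' - x) r + m • atWall i 0 c) :
    Reaches E (box (∑ j, w j + ∑ j, w' j + B)) (p, w) (q, w') := by
  have hw₀ : 0 ≤ w := (le_atWall_iff.2 ⟨hx, Nat.cast_nonneg B⟩).trans hw
  have hw'₀ : 0 ≤ w' := (le_atWall_iff.2 ⟨hx', Nat.cast_nonneg B⟩).trans hw'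
  have hwall := (add_le_sum_add_sum_add hw₀ hw'₀ (le_refl B) i).1
  have hline := fun j => add_le_sum_add_sum_add hw₀ hw'₀ hB (i.succAbove j)
  have hw'_eq : w' = atWall i (x' + (w i - x)) (i.removeNth w + r + m • c) := by
    nth_rewrite 1 [h, ← atWall_removeNth (i := i) (w := w)]
    rw [nsmul_atWall_zero, atWall_add_atWall, atWall_add_atWall]
    congr 1
    ring
  have hw_eq : atWall i (x + (w i - x)) (i.removeNth w) = w := by
    rw [add_sub_cancel, atWall_removeNth]
  have hfree : i.removeNth w' = i.removeNth w + r + m • c :=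
    (Fin.eq_insertNth_iff.1 hw'_eq).2
  obtain ⟨hwx, hwB⟩ := atWall_le_iff.1 hw
  obtain ⟨-, hwB'⟩ := atWall_le_iff.1 hw'
  have hB' : ((3 * (Λ * M) : ℕ) : Vec 1) ≤ B := Nat.mono_cast hB
  have hrun := (hr.reaches_insert_nsmul_spannedBox (w := i.removeNth w) (m := m)
    (StripEdge.norm_le hE) hL hc hN).of_stripEdge (t := w i - x)
    (A' := box (∑ j, w j + ∑ j, w' j + B)) <| by
      intro s ξ hξ η hη
      rw [← hfree] at hη
      obtain ⟨hη₀, hηR⟩ := spannedBox_subset_Icc (hB'.trans hwB) (hB'.trans hwB')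
        (fun j => (hline j).1) (fun j => (hline j).2) hη
      obtain ⟨hξ₀, hξD⟩ := hξ
      exact ⟨le_atWall_iff.2 ⟨show (0 : ℤ) ≤ _ by omega, hη₀⟩, atWall_le_iff.2 ⟨by omega, hηR⟩⟩
  simp only [hw_eq] at hrun
  rwa [← hw'_eq] at hrun

lemma certified_of_strip {Q : Finset α} {A : Set (α × Vec 2)} (hQ : ∀ p e q, E p e q → q ∈ Q)
    (hE : ∀ p e q, E p e q → ‖e‖ ≤ M) (hM : 1 ≤ M) (hDB : D ≤ B)
    (hB : 3 * (walkBound (Q.card * D) M * M) ≤ B) (hA : ∀ x ∈ A, x.2 i ∈ Set.Ico (0 : ℤ) D)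
    {x x' : α × Vec 2} (hxQ : x.1 ∈ Q) (hx : x ∈ A) (hx' : x' ∈ A)
    (hfree : (B : Vec 1) ≤ i.removeNth x.2) (hfree' : (B : Vec 1) ≤ i.removeNth x'.2)
    (h : Reaches E A x x') : Certified E (pieceBound B) B x x' := by
  classical
  obtain ⟨z, L, S, hwalk, (hz : i.removeNth x'.2 = i.removeNth x.2 + z)⟩ :=
    (h.stripEdge hA).exists_walk
  obtain ⟨r, Lr, Sr, n, c, hr, hLr, hc, rfl⟩ := hwalk.exists_line_normalForm
    (StripEdge.target_mem hQ) (StripEdge.norm_le hE) hM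
    (Finset.mem_product.2 ⟨hxQ, Finset.mem_Ico.2 (hA _ hx)⟩)
  have hcard : (Q ×ˢ Finset.Ico (0 : ℤ) D).card = Q.card * D := by simp
  rw [hcard] at hLr hc
  have hΛ : Q.card * D ≤ walkBound (Q.card * D) M := le_walkBound hM
  have hbound : ∀ {L : ℕ} {y : Vec 1}, ‖y‖ ≤ L * M → L ≤ walkBound (Q.card * D) M → ‖y‖ ≤ B := by
    intro L y hy hL
    refine hy.trans ?_
    exact_mod_cast (Nat.mul_le_mul_right M hL).trans (by omega)
  have hr_norm := hbound (hr.norm_le (StripEdge.norm_le hE)) hLr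
  have hc_norm := hbound (hc.norm_le (StripEdge.norm_le hE) M.cast_nonneg) hΛ
  obtain ⟨hxi, hxi'⟩ := hA x hx
  obtain ⟨hx'i, hx'i'⟩ := hA x' hx'
  have hB₁ : 1 ≤ B := by omega
  refine certified_of_piece (θ := atWall i (x.2 i) B) (θ' := atWall i (x'.2 i) B)
    (β := atWall i (x'.2 i - x.2 i) r) (c := 0) (d := atWall i 0 c) (K := 0) (m := n) hB₁
    (norm_atWall_le_iff.2 ⟨abs_le.2 (by omega), norm_natCast_vec_le 1 B⟩)
    (norm_atWall_le_iff.2 ⟨abs_le.2 (by omega), norm_natCast_vec_le 1 B⟩)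
    (norm_atWall_le_iff.2 ⟨abs_le.2 (by omega), hr_norm⟩) (by simp)
    (norm_atWall_le_iff.2 ⟨by simp, hc_norm⟩) (le_atWall_iff.2 ⟨hxi, B.cast_nonneg⟩)
    (le_atWall_iff.2 ⟨hx'i, B.cast_nonneg⟩) ?_ (atWall_le_iff.2 ⟨le_rfl, hfree⟩)
    (atWall_le_iff.2 ⟨le_rfl, hfree'⟩) ?_
  · intro w w' K m hw hw' heq
    rw [smul_zero, add_zero] at heq
    exact reaches_of_strip_normalForm hE hDB hB hr hLr hc hΛ hxi hx'i hw hw' heq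
  · nth_rewrite 1 [← atWall_removeNth (i := i) (w := x.2), ← atWall_removeNth (i := i) (w := x'.2)]
    rw [smul_zero, add_zero, nsmul_atWall_zero, atWall_add_atWall, atWall_add_atWall, hz,
      add_sub_cancel, add_zero, add_assoc]

end StripPiece

end Strip

section RelPow

variable {β : Type*} {R R' : β → β → Prop} {a b c : β} {m n : ℕ}

/-- The `n`-th power of the relation `R`. -/
def relPow (R : β → β → Prop) : ℕ → β → β → Prop
  | 0 => Eq
  | n + 1 => Relation.Comp R (relPow R n)

lemma relPow_add (R : β → β → Prop) (m n : ℕ) :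
    relPow R (m + n) = Relation.Comp (relPow R m) (relPow R n) := by
  induction m with
  | zero => rw [Nat.zero_add, relPow, Relation.eq_comp]
  | succ m ih => rw [Nat.succ_add, relPow, ih, relPow, Relation.comp_assoc]

lemma relPow_one : relPow R 1 a b ↔ R a b := by
  rw [relPow, relPow, Relation.comp_eq]

lemma relPow_trans (h : relPow R m a b) (h' : relPow R n b c) : relPow R (m + n) a c :=
  relPow_add R m n ▸ ⟨b, h, h'⟩

lemma relPow_mono (hR : R ≤ R') (h : relPow R n a b) : relPow R' n a b := by
  induction n generalizing a with
  | zero => exact h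
  | succ n ih =>
    obtain ⟨c, hac, hcb⟩ := h
    exact ⟨c, hR _ _ hac, ih hcb⟩

lemma relPow_of_le (ha : R a a) (hmn : m ≤ n) (h : relPow R m a b) : relPow R n a b := by
  induction hmn with
  | refl => exact h
  | step _ ih => exact ⟨a, ha, ih⟩

lemma certified_of_relPow {α : Type*} {E : α → Vec 2 → α → Prop} {a Δ : ℕ} (ha : 2 ≤ a) (k : ℕ)
    {x x' : α × Vec 2} (h : relPow (Certified E a Δ) (2 ^ k) x x') :
    Certified E (a ^ 64 ^ k) Δ x x' := by
  induction k generalizing x x' with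
  | zero => simpa using relPow_one.1 h
  | succ k ih =>
    rw [pow_succ, mul_two, relPow_add] at h
    obtain ⟨y, hxy, hyx'⟩ := h
    rw [pow_succ, pow_mul]
    exact (ih hxy).trans (ih hyx') (ha.trans (Nat.le_self_pow (by positivity) a))

end RelPow

section Visits

variable {α W : Type*} [Add W] {E : α → W → α → Prop} {A I : Set (α × W)} {x x' : α × W}

lemma Reaches.target_mem (h : Reaches E A x x') (hx : x ∈ A) : x' ∈ A := by
  cases h with
  | refl => exact hx
  | tail _ hstep => exact hstep.choose_spec.2.2.2

lemma Reaches.inter_of_step (hI : ∀ y y', Step E A y y' → y ∈ I → y' ∈ I) (hx : x ∈ A ∩ I)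
    (h : Reaches E A x x') : Reaches E (A ∩ I) x x' := by
  induction h with
  | refl => exact .refl
  | @tail y y' _ hstep ih =>
    have hy := ih.target_mem hx
    obtain ⟨e, he, heq, -, hy'⟩ := id hstep
    exact ih.tail ⟨e, he, heq, hy, hy', hI _ _ hstep hy.2⟩

lemma Reaches.diff_or_exists_first (hx : x ∈ A \ I) (h : Reaches E A x x') :
    Reaches E (A \ I) x x' ∨
      ∃ y' y, Reaches E (A \ I) x y' ∧ Step E A y' y ∧ y ∈ I ∧ Reaches E A y x' := by
  induction h with
  | refl => exact .inl .refl
  | @tail b c _ hstep ih =>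
    rcases ih with hb | ⟨y', y, hy', hy, hyI, hyb⟩
    · by_cases hc : c ∈ I
      · exact .inr ⟨b, c, hb, hstep, hc, .refl⟩
      · obtain ⟨e, he, heq, -, hcA⟩ := hstep
        exact .inl (hb.tail ⟨e, he, heq, hb.target_mem hx, hcA, hc⟩)
    · exact .inr ⟨y', y, hy', hy, hyI, hyb.tail hstep⟩

lemma Reaches.exists_last (hx : x ∈ I) (h : Reaches E A x x') :
    ∃ y ∈ I, Reaches E A x y ∧
      (y = x' ∨ ∃ z, Step E A y z ∧ z ∈ A \ I ∧ Reaches E (A \ I) z x') := by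
  induction h with
  | refl => exact ⟨x, hx, .refl, .inl rfl⟩
  | @tail b c hb hstep ih =>
    obtain ⟨e, he, heq, -, hcA⟩ := id hstep
    by_cases hc : c ∈ I
    · exact ⟨c, hc, hb.tail hstep, .inl rfl⟩
    · obtain ⟨y, hy, hxy, rfl | ⟨z, hyz, hz, hzb⟩⟩ := ih
      · exact ⟨y, hy, hxy, .inr ⟨c, hstep, ⟨hcA, hc⟩, .refl⟩⟩
      · exact ⟨y, hy, hxy, .inr ⟨z, hyz, hz, hzb.tail ⟨e, he, heq, hzb.target_mem hz, hcA, hc⟩⟩⟩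

end Visits

section Decomposition

variable {α : Type*} {E : α → Vec 2 → α → Prop} {Q S : Finset α} {M D B C k : ℕ}
  {x x' : α × Vec 2}

/-- A graph with finitely many states and updates of norm at most `M`, together with two distances:
counters at least `D` leave room for the short walks in a spread form, and counters at least `B`
leave room for the short walks of a strip in which the other counter is less than `D`. -/
structure Scales (E : α → Vec 2 → α → Prop) (Q : Finset α) (M D B : ℕ) : Prop where
  target_mem : ∀ p e q, E p e q → q ∈ Q
  norm_le : ∀ p e q, E p e q → ‖e‖ ≤ M
  one_le : 1 ≤ M
  interior_le : 5 * (walkBound Q.card M * M) ≤ D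
  strip_le : 3 * (walkBound (Q.card * D) M * M) ≤ B
  add_le : D + M ≤ B

/-- The configurations over `ℕ²` outside of `[0, B)²`, of which only those with a state in `S` may
lie in the interior `[D, ∞)²`. -/
def outerRegion (Q S : Finset α) (D B : ℕ) : Set (α × Vec 2) :=
  {x | 0 ≤ x.2 ∧ x.1 ∈ Q ∧ (∃ i, (B : ℤ) ≤ x.2 i) ∧ ((D : Vec 2) ≤ x.2 → x.1 ∈ S)}

lemma le_removeNth_of_mem_outerRegion (hx : x ∈ outerRegion Q S D B) {i : Fin 2}
    (hi : x.2 i < B) : (B : Vec 1) ≤ i.removeNth x.2 := by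
  obtain ⟨-, -, ⟨j, hj⟩, -⟩ := hx
  obtain ⟨l, rfl⟩ := Fin.exists_succAbove_eq (y := i) (x := j) (by rintro rfl; omega)
  intro l'
  rwa [Subsingleton.elim l' l]

lemma exists_lt_of_mem_outerRegion_empty (hx : x ∈ outerRegion Q ∅ D B) : ∃ i, x.2 i < D := by
  by_contra! hD
  exact Finset.notMem_empty _ (hx.2.2.2 hD)

namespace Scales

lemma one_le_strip (h : Scales E Q M D B) : 1 ≤ B := h.one_le.trans (by have := h.add_le; omega)

lemma certified_of_step (h : Scales E Q M D B) {A : Set (α × Vec 2)} (hA : ∀ x ∈ A, 0 ≤ x.2)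
    (hstep : Step E A x x') : Certified E (pieceBound B) B x x' :=
  VASS.certified_of_step hA h.one_le_strip (fun p e q he => (h.norm_le p e q he).trans
    (by exact_mod_cast (Nat.le_add_left M D).trans h.add_le)) hstep

lemma lt_of_step_outerRegion (h : Scales E Q M D B) {i : Fin 2}
    (hstep : Step E (outerRegion Q ∅ D B) x x') (hi : x.2 i < D) : x'.2 i < D := by
  obtain ⟨e, he, heq, hx, hx'⟩ := hstep
  have hDB := h.add_le
  have hfree := le_removeNth_of_mem_outerRegion hx (i := i) (by omega)
  obtain ⟨j, hj⟩ := exists_lt_of_mem_outerRegion_empty hx'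
  rcases eq_or_ne j i with rfl | hji
  · exact hj
  · obtain ⟨l, rfl⟩ := Fin.exists_succAbove_eq hji
    have hxj : (B : ℤ) ≤ x.2 (i.succAbove l) := hfree l
    have hej := abs_le.1 (norm_le_natCast_iff.1 (h.norm_le _ _ _ he) (i.succAbove l))
    rw [heq, Pi.add_apply] at hj
    omega

lemma certified_of_outerRegion_empty (h : Scales E Q M D B) (hx : x ∈ outerRegion Q ∅ D B)
    (hrun : Reaches E (outerRegion Q ∅ D B) x x') : Certified E (pieceBound B) B x x' := by
  have hDB : D ≤ B := (Nat.le_add_right D M).trans h.add_le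
  obtain ⟨i, hi⟩ := exists_lt_of_mem_outerRegion_empty hx
  have hxi : x ∈ outerRegion Q ∅ D B ∩ {y | y.2 i < D} := ⟨hx, hi⟩
  have hstrip : Reaches E (outerRegion Q ∅ D B ∩ {y | y.2 i < D}) x x' :=
    hrun.inter_of_step (fun _ _ => h.lt_of_step_outerRegion) hxi
  have hx' := hstrip.target_mem hxi
  have hfree : ∀ y ∈ outerRegion Q ∅ D B ∩ {y | y.2 i < D}, (B : Vec 1) ≤ i.removeNth y.2 :=
    fun y hy => le_removeNth_of_mem_outerRegion hy.1 (hy.2.trans_le (by exact_mod_cast hDB))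
  exact certified_of_strip h.target_mem h.norm_le h.one_le hDB h.strip_le
    (fun y hy => ⟨hy.1.1 i, hy.2⟩) hx.2.1 hxi hx' (hfree x hxi) (hfree x' hx') hstrip

lemma certified_of_interior (h : Scales E Q M D B) {A : Set (α × Vec 2)} {p : α} {w w' : Vec 2}
    (hp : p ∈ Q) (hw : (D : Vec 2) ≤ w) (hw' : (D : Vec 2) ≤ w')
    (hrun : Reaches E A (p, w) (p, w')) : Certified E (pieceBound B) B (p, w) (p, w') := by
  classical
  obtain ⟨z, L, S, hwalk, (rfl : w' = w + z)⟩ := hrun.exists_walk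
  exact certified_of_hasSpreadForm h.norm_le (le_walkBound h.one_le) h.interior_le
    ((Nat.le_add_right D M).trans h.add_le) h.one_le_strip
    (hwalk.hasSpreadForm h.target_mem h.norm_le h.one_le hp) hw hw'

lemma certified_or_exists_interior (h : Scales E Q M D B) (hx : x ∈ outerRegion Q S D B)
    (hrun : Reaches E (outerRegion Q S D B) x x') :
    Certified E (pieceBound B) B x x' ∨
      ∃ y ∈ outerRegion Q S D B, (D : Vec 2) ≤ y.2 ∧
        relPow (Certified E (pieceBound B) B) 2 x y ∧ Reaches E (outerRegion Q S D B) y x' := by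
  have hrefl := certified_refl (E := E) (p := x.1) (Δ := B) h.one_le_strip hx.1
  have hsub : outerRegion Q S D B \ {y | (D : Vec 2) ≤ y.2} ⊆ outerRegion Q ∅ D B :=
    fun y hy => ⟨hy.1.1, hy.1.2.1, hy.1.2.2.1, fun hD => absurd hD hy.2⟩
  by_cases hD : (D : Vec 2) ≤ x.2
  · exact .inr ⟨x, hx, hD, ⟨x, hrefl, relPow_one.2 hrefl⟩, hrun⟩
  · rcases hrun.diff_or_exists_first (I := {y | (D : Vec 2) ≤ y.2}) ⟨hx, hD⟩ with
      hwall | ⟨y', y, hxy', hy'y, hy, hyx'⟩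
    · exact .inl (h.certified_of_outerRegion_empty (hsub ⟨hx, hD⟩) (hwall.mono hsub))
    · have hpiece := h.certified_of_outerRegion_empty (hsub ⟨hx, hD⟩) (hxy'.mono hsub)
      have hstep := h.certified_of_step (fun z hz => hz.1) hy'y
      exact .inr ⟨y, hy'y.choose_spec.2.2.2, hy, ⟨y', hpiece, relPow_one.2 hstep⟩, hyx'⟩

/-- After its last visit to the interior in a given state, the run can be treated as one with fewer
interior states. -/
lemma relPow_certified_of_outerRegion (h : Scales E Q M D B) (S : Finset α) :
    ∀ {x x' : α × Vec 2}, x ∈ outerRegion Q S D B → Reaches E (outerRegion Q S D B) x x' →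
      relPow (Certified E (pieceBound B) B) (4 * S.card + 1) x x' := by
  classical
  induction S using Finset.eraseInduction with
  | H S ih =>
    intro x x' hx hrun
    have hrefl := certified_refl (E := E) (p := x.1) (Δ := B) h.one_le_strip hx.1
    rcases h.certified_or_exists_interior hx hrun with hcert | ⟨⟨p, w⟩, hy, hw, hxy, hyx'⟩
    · exact relPow_of_le hrefl (by omega) (relPow_one.2 hcert)
    have hp : p ∈ S := hy.2.2.2 hw
    have hS := Finset.card_erase_add_one hp
    obtain ⟨⟨p', w'⟩, ⟨hw', hp'⟩, hloop, hrest⟩ :=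
      hyx'.exists_last (I := {z | (D : Vec 2) ≤ z.2 ∧ z.1 = p}) ⟨hw, rfl⟩
    obtain rfl : p = p' := hp'.symm
    have hpieces := relPow_trans hxy
      (relPow_one.2 (h.certified_of_interior hy.2.1 hw hw' hloop))
    rcases hrest with rfl | ⟨z, hstep, hz, hzx'⟩
    · exact relPow_of_le hrefl (by omega) hpieces
    · have hsub : outerRegion Q S D B \ {z | (D : Vec 2) ≤ z.2 ∧ z.1 = p} ⊆
          outerRegion Q (S.erase p) D B := fun y hy =>
        ⟨hy.1.1, hy.1.2.1, hy.1.2.2.1,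
          fun hD => Finset.mem_erase.2 ⟨fun hp => hy.2 ⟨hD, hp⟩, hy.1.2.2.2 hD⟩⟩
      have hstep' := relPow_one.2 (h.certified_of_step (fun z hz => hz.1) hstep)
      exact relPow_of_le hrefl (by omega) (relPow_trans (relPow_trans hpieces hstep')
        (ih p hp (hsub hz) (hzx'.mono hsub)))

end Scales

/-- The size of a box in which a run with counters at most `C` at its source and its target exists
if there is one that consists of at most `2 ^ k` pieces. -/
def boxRadius (B C k : ℕ) : ℕ := (3 * pieceBound B ^ 64 ^ k * (C + 1)) ^ 20 + B

namespace Scales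

lemma reaches_box_of_relPow (h : Scales E Q M D B) {n : ℕ} (hn : n ≤ 2 ^ k) (hx₀ : 0 ≤ x.2)
    (hx : ‖x.2‖ ≤ C) (hx' : ‖x'.2‖ ≤ C) (hpieces : relPow (Certified E (pieceBound B) B) n x x') :
    Reaches E (box (boxRadius B C k)) x x' := by
  have hB := h.one_le_strip
  have ha : 2 ≤ pieceBound B := by
    have : 1 ≤ (21 * B) ^ 4 := Nat.one_le_pow _ _ (by omega)
    unfold pieceBound
    nlinarith
  have hpad := relPow_of_le (certified_refl (p := x.1) hB hx₀) hn hpieces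
  exact (certified_of_relPow ha k hpad).reaches (Nat.one_le_pow _ _ (by omega)) hx hx'

lemma reaches_box_of_pieces (h : Scales E Q M D B) (hk : 4 * Q.card + 3 ≤ 2 ^ k) {y y' : α × Vec 2}
    (hx₀ : 0 ≤ x.2) (hx : ‖x.2‖ ≤ C) (hx' : ‖x'.2‖ ≤ C)
    (hxy : Certified E (pieceBound B) B x y) (hy : y ∈ outerRegion Q Q D B)
    (hyy' : Reaches E (outerRegion Q Q D B) y y')
    (hy'x' : Certified E (pieceBound B) B y' x') : Reaches E (box (boxRadius B C k)) x x' :=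
  h.reaches_box_of_relPow (n := 1 + (4 * Q.card + 1) + 1) (by omega) hx₀ hx hx' <|
    relPow_trans (relPow_trans (relPow_one.2 hxy) (h.relPow_certified_of_outerRegion Q hy hyy'))
      (relPow_one.2 hy'x')

/-- The second alternative keeps track of the last configuration `y` of norm at most `C` from which
the run has left `[0, B)²`. -/
lemma reaches_box_or_exists_excursion (h : Scales E Q M D B) (hk : 4 * Q.card + 3 ≤ 2 ^ k)
    (hC : B ≤ C) (hx : ‖x.2‖ ≤ C) (hrun : Reaches E {y | 0 ≤ y.2} x x') :
    (‖x'.2‖ ≤ C ∧ Reaches E (box (boxRadius B C k)) x x') ∨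
      ∃ y z, 0 ≤ y.2 ∧ ‖y.2‖ ≤ C ∧ Reaches E (box (boxRadius B C k)) x y ∧
        Certified E (pieceBound B) B y z ∧ z ∈ outerRegion Q Q D B ∧
        Reaches E (outerRegion Q Q D B) z x' := by
  induction hrun with
  | refl => exact .inl ⟨hx, .refl⟩
  | @tail a b _ hstep ih =>
    obtain ⟨e, he, heq, ha₀, hb₀⟩ := id hstep
    have hcert := h.certified_of_step (fun _ hy => hy) hstep
    by_cases hb : ∃ i, (B : ℤ) ≤ b.2 i
    · have hbQ := h.target_mem _ _ _ he
      have hbOut : b ∈ outerRegion Q Q D B := ⟨hb₀, hbQ, hb, fun _ => hbQ⟩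
      rcases ih with ⟨haC, hxa⟩ | ⟨y, z, hy₀, hyC, hxy, hyz, hz, hza⟩
      · exact .inr ⟨a, b, ha₀, haC, hxa, hcert, hbOut, .refl⟩
      · exact .inr ⟨y, z, hy₀, hyC, hxy, hyz, hz,
          hza.tail ⟨e, he, heq, hza.target_mem hz, hbOut⟩⟩
    · push Not at hb
      have hbC : ‖b.2‖ ≤ C := norm_le_natCast_iff.2 fun i =>
        abs_le.2 ⟨(neg_nonpos.2 C.cast_nonneg).trans (hb₀ i), by have := hb i; omega⟩
      rcases ih with ⟨haC, hxa⟩ | ⟨y, z, hy₀, hyC, hxy, hyz, hz, hza⟩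
      · exact .inl ⟨hbC, hxa.trans
          (h.reaches_box_of_relPow Nat.one_le_two_pow ha₀ haC hbC (relPow_one.2 hcert))⟩
      · exact .inl ⟨hbC, hxy.trans (h.reaches_box_of_pieces hk hy₀ hyC hbC hyz hz hza hcert)⟩

theorem reaches_box (h : Scales E Q M D B) (hk : 4 * Q.card + 3 ≤ 2 ^ k) (hC : B ≤ C)
    (hx : ‖x.2‖ ≤ C) (hx' : ‖x'.2‖ ≤ C) (hrun : Reaches E {y | 0 ≤ y.2} x x') :
    Reaches E (box (boxRadius B C k)) x x' := by
  rcases h.reaches_box_or_exists_excursion hk hC hx hrun with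
    ⟨-, hbox⟩ | ⟨y, z, hy₀, hyC, hxy, hyz, hz, hzx'⟩
  · exact hbox
  · exact hxy.trans (h.reaches_box_of_pieces hk hy₀ hyC hx' hyz hz hzx'
      (certified_refl h.one_le_strip (hzx'.target_mem hz).1))

end Scales

end Decomposition

section LoopRemoval

variable {β : Type*} {R : β → β → Prop} {a b : β}

lemma reflTransGen_and_ne_source (h : Relation.ReflTransGen R a b) :
    Relation.ReflTransGen (fun x y => R x y ∧ y ≠ a) a b := by
  induction h with
  | refl => exact .refl
  | @tail _ c _ hc ih =>
    rcases eq_or_ne c a with rfl | hca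
    · exact .refl
    · exact ih.tail ⟨hc, hca⟩

lemma exists_relPow_le_card (s : Finset β) (hR : ∀ x y, R x y → y ∈ s)
    (h : Relation.ReflTransGen R a b) : ∃ n ≤ s.card, relPow R n a b := by
  classical
  induction s using Finset.eraseInduction generalizing R a with
  | H s ih =>
    rcases h.cases_head with rfl | ⟨c, hac, hcb⟩
    · exact ⟨0, Nat.zero_le _, rfl⟩
    · have hc := hR a c hac
      obtain ⟨n, hn, hpow⟩ := ih c hc (fun x y hxy => Finset.mem_erase.2 ⟨hxy.2, hR x y hxy.1⟩)
        (reflTransGen_and_ne_source hcb)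
      refine ⟨n + 1, ?_, c, hac, relPow_mono (fun _ _ hxy => hxy.1) hpow⟩
      rw [← Finset.card_erase_add_one hc]
      exact Nat.add_le_add_right hn 1

end LoopRemoval

section Runs

variable {d n : ℕ} {T : Finset (Trans d)} {A : Set (Vec d)} {p q : ℕ} {u v : Vec d} {t : Trans d}
  {π : List (Trans d)}

/-- The edges of the graph with update labels given by the transitions in `T`. -/
def transEdge (T : Finset (Trans d)) (p : ℕ) (e : Vec d) (q : ℕ) : Prop := (p, e, q) ∈ T

lemma norm_le_vnorm (z : Vec d) : ‖z‖ ≤ vnorm z :=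
  norm_le_natCast_iff.2 fun i => by
    rw [Int.abs_eq_natAbs]
    exact_mod_cast Finset.le_sup (f := fun i => (z i).natAbs) (Finset.mem_univ i)

lemma norm_le_tnorm {e : Vec d} (h : transEdge T p e q) : ‖e‖ ≤ tnorm T :=
  (norm_le_vnorm e).trans
    (by exact_mod_cast Finset.le_sup (f := fun t : Trans d => vnorm t.2.1) h)

lemma disp_cons : disp (t :: π) = t.2.1 + disp π := by
  simp only [disp, List.map_cons, List.sum_cons]

lemma run_nil_iff : Run T A p u q v [] ↔ p = q ∧ v = u ∧ u ∈ A := by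
  constructor
  · rintro ⟨-, hpq, hu, hv, -⟩
    exact ⟨hpq, by simpa [disp] using hv, hu⟩
  · rintro ⟨rfl, rfl, hu⟩
    exact ⟨by simp, rfl, hu, by simp [disp], fun i hi hi' => absurd (hi.trans hi') (by simp)⟩

lemma run_cons_iff : Run T A p u q v (t :: π) ↔
    t ∈ T ∧ t.1 = p ∧ u ∈ A ∧ Run T A t.2.2 (u + t.2.1) q v π := by
  constructor
  · rintro ⟨hT, ⟨hp, hpath⟩, hu, hv, hA⟩
    have hu' : u + t.2.1 ∈ A := by simpa [disp] using hA 1 le_rfl (by simp)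
    refine ⟨hT t List.mem_cons_self, hp, hu, fun s hs => hT s (List.mem_cons_of_mem t hs), hpath,
      hu', by rw [hv, disp_cons, add_assoc], fun i _ hi => ?_⟩
    rw [add_assoc, ← disp_cons]
    exact hA (i + 1) (Nat.le_add_left 1 i) (Nat.succ_le_succ hi)
  · rintro ⟨ht, hp, hu, hT, hpath, hu', hv, hA⟩
    refine ⟨List.forall_mem_cons.2 ⟨ht, hT⟩, ⟨hp, hpath⟩, hu, by rw [hv, disp_cons, add_assoc],
      fun i hi hi' => ?_⟩
    obtain ⟨j, rfl⟩ := Nat.exists_eq_add_of_le' hi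
    rw [List.take_succ_cons, disp_cons, ← add_assoc]
    rcases Nat.eq_zero_or_pos j with rfl | hj
    · simpa [disp] using hu'
    · exact hA j hj (Nat.le_of_succ_le_succ hi')

lemma Run.reaches (h : Run T A p u q v π) :
    Reaches (transEdge T) (Prod.snd ⁻¹' A) (p, u) (q, v) := by
  induction π generalizing p u with
  | nil =>
    obtain ⟨rfl, rfl, -⟩ := run_nil_iff.1 h
    exact .refl
  | cons t π ih =>
    obtain ⟨ht, rfl, hu, hπ⟩ := run_cons_iff.1 h
    exact .head (b := (t.2.2, u + t.2.1)) ⟨t.2.1, ht, rfl, hu, hπ.2.2.1⟩ (ih hπ)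

lemma exists_run_of_relPow_step (hu : u ∈ A)
    (h : relPow (Step (transEdge T) (Prod.snd ⁻¹' A)) n (p, u) (q, v)) :
    ∃ π, Run T A p u q v π ∧ π.length = n := by
  induction n generalizing p u with
  | zero =>
    obtain ⟨rfl, rfl⟩ := Prod.mk.inj h
    exact ⟨[], run_nil_iff.2 ⟨rfl, rfl, hu⟩, rfl⟩
  | succ n ih =>
    obtain ⟨⟨r, w⟩, ⟨e, he, (rfl : w = u + e), -, hw⟩, hrest⟩ := h
    obtain ⟨π, hπ, rfl⟩ := ih hw hrest
    exact ⟨(p, e, r) :: π, run_cons_iff.2 ⟨he, rfl, hu, hπ⟩, rfl⟩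

end Runs

section LengthBound

lemma card_Icc_vec (R : ℕ) (d : ℕ) :
    (Finset.Icc (0 : Vec d) fun _ => (R : ℤ)).card = (R + 1) ^ d := by
  rw [Pi.card_Icc]
  simp

lemma exists_run_of_reaches_box {Q : Finset ℕ} {T : Finset (Trans 2)} {p q R : ℕ} {u v : Vec 2}
    (hQ : ∀ p e q, transEdge T p e q → q ∈ Q) (hu : 0 ≤ u)
    (h : Reaches (transEdge T) (box R) (p, u) (q, v)) :
    ∃ π, Run T (NatSet 2) p u q v π ∧ π.length ≤ Q.card * (R + 1) ^ 2 := by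
  obtain ⟨n, hn, hpow⟩ := exists_relPow_le_card (Q ×ˢ Finset.Icc 0 fun _ => (R : ℤ))
    (fun x y ⟨e, he, _, _, hy⟩ => Finset.mem_product.2 ⟨hQ _ _ _ he, Finset.mem_Icc.2 hy⟩) h
  rw [Finset.card_product, card_Icc_vec] at hn
  have hpow' : relPow (Step (transEdge T) (Prod.snd ⁻¹' NatSet 2)) n (p, u) (q, v) :=
    relPow_mono (fun _ _ hxy => hxy.mono fun _ hy => hy.1) hpow
  obtain ⟨π, hπ, rfl⟩ := exists_run_of_relPow_step hu hpow'
  exact ⟨π, hπ, hn⟩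

/-- The distance `D` of `Scales` for `N` states and updates of norm at most `M`. -/
def interiorScale (N M : ℕ) : ℕ := 5 * (walkBound N M * M)

/-- The distance `B` of `Scales` for `N` states and updates of norm at most `M`. -/
def stripScale (N M : ℕ) : ℕ :=
  3 * (walkBound (N * interiorScale N M) M * M) + (interiorScale N M + M)

/-- The number of configurations in a box that contains a run between two configurations of norm at
most `C`, for `N` states and updates of norm at most `M`. -/
def runLengthBound (N M C : ℕ) : ℕ :=
  N * (boxRadius (stripScale N M) (stripScale N M + C) (Nat.log 2 (4 * N + 3) + 1) + 1) ^ 2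

lemma scales_transEdge {Q : Finset ℕ} {T : Finset (Trans 2)}
    (hQ : ∀ p e q, transEdge T p e q → q ∈ Q) :
    Scales (transEdge T) Q (tnorm T + 1) (interiorScale Q.card (tnorm T + 1))
      (stripScale Q.card (tnorm T + 1)) where
  target_mem := hQ
  norm_le p e q h := (norm_le_tnorm h).trans (by exact_mod_cast Nat.le_succ _)
  one_le := Nat.le_add_left 1 _
  interior_le := le_rfl
  strip_le := Nat.le_add_right _ _
  add_le := Nat.le_add_left _ _

theorem exists_run_length_le {Q : Finset ℕ} {T : Finset (Trans 2)} {p q : ℕ} {u v : Vec 2}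
    (hQ : ∀ p e q, transEdge T p e q → q ∈ Q) (h : Reach T (NatSet 2) p u q v) :
    ∃ π, Run T (NatSet 2) p u q v π ∧
      π.length ≤ runLengthBound Q.card (tnorm T + 1) (vnorm u + vnorm v) := by
  obtain ⟨π, hπ⟩ := h
  have hnorm : ∀ (w : Vec 2) {C : ℕ}, vnorm w ≤ C → ‖w‖ ≤ C :=
    fun w _ hw => (norm_le_vnorm w).trans (by exact_mod_cast hw)
  exact exists_run_of_reaches_box hQ hπ.2.2.1 <|
    (scales_transEdge hQ).reaches_box (Nat.lt_pow_succ_log_self one_lt_two _).le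
      (Nat.le_add_right _ _) (hnorm u (by omega)) (hnorm v (by omega)) hπ.reaches

end LengthBound

/-- Numbers that are at most exponential in the `k`-th power of `X`. -/
def ExpBounded (X k a : ℕ) : Prop := a ≤ 2 ^ X ^ k

namespace ExpBounded

variable {X j k m n a b : ℕ}

lemma of_le (h : ExpBounded X k b) (hab : a ≤ b) : ExpBounded X k a := hab.trans h

lemma of_le_pow (h : a ≤ X ^ k) : ExpBounded X k a := h.trans Nat.lt_two_pow_self.le

lemma of_le_const (hX : 3 ≤ X) (h : a ≤ 2 ^ 3 ^ k) : ExpBounded X k a :=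
  h.trans (Nat.pow_le_pow_right two_pos (Nat.pow_le_pow_left hX k))

lemma mono (hX : 3 ≤ X) (hjk : j ≤ k) (h : ExpBounded X j a) : ExpBounded X k a :=
  h.trans (Nat.pow_le_pow_right two_pos (Nat.pow_le_pow_right (by omega) hjk))

lemma mul (hX : 3 ≤ X) (ha : ExpBounded X j a) (hb : ExpBounded X k b) :
    ExpBounded X (max j k + 1) (a * b) := by
  have hexp : X ^ max j k + X ^ max j k ≤ X ^ (max j k + 1) := by
    rw [pow_succ, ← mul_two]
    exact Nat.mul_le_mul_left _ (by omega)
  calc a * b ≤ 2 ^ X ^ max j k * 2 ^ X ^ max j k :=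
        Nat.mul_le_mul (ha.mono hX (le_max_left j k)) (hb.mono hX (le_max_right j k))
    _ = 2 ^ (X ^ max j k + X ^ max j k) := (pow_add _ _ _).symm
    _ ≤ 2 ^ X ^ (max j k + 1) := Nat.pow_le_pow_right two_pos hexp

lemma add (hX : 3 ≤ X) (ha : ExpBounded X j a) (hb : ExpBounded X k b) :
    ExpBounded X (max j k + 1) (a + b) := by
  have hexp : X ^ max j k + 1 ≤ X ^ (max j k + 1) := by
    have : 1 ≤ X ^ max j k := Nat.one_le_pow _ _ (by omega)
    rw [pow_succ]
    nlinarith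
  calc a + b ≤ 2 ^ X ^ max j k + 2 ^ X ^ max j k :=
        Nat.add_le_add (ha.mono hX (le_max_left j k)) (hb.mono hX (le_max_right j k))
    _ = 2 ^ (X ^ max j k + 1) := by rw [pow_succ, mul_two]
    _ ≤ 2 ^ X ^ (max j k + 1) := Nat.pow_le_pow_right two_pos hexp

lemma pow (ha : ExpBounded X k a) (hn : n ≤ X ^ m) : ExpBounded X (k + m) (a ^ n) :=
  calc a ^ n ≤ (2 ^ X ^ k) ^ n := Nat.pow_le_pow_left ha n
    _ = 2 ^ (X ^ k * n) := (pow_mul _ _ _).symm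
    _ ≤ 2 ^ X ^ (k + m) := Nat.pow_le_pow_right two_pos (pow_add X k m ▸ Nat.mul_le_mul_left _ hn)

end ExpBounded

section Estimates

variable {X j N M B C k : ℕ}

lemma le_pow_of_three_le (hX : 3 ≤ X) (h : N ≤ 3 ^ j) : N ≤ X ^ j :=
  h.trans (Nat.pow_le_pow_left hX j)

lemma expBounded_walkBound (hX : 3 ≤ X) (hN : ExpBounded X j N) (hM : ExpBounded X j M) :
    ExpBounded X (j + 5) (walkBound N M * M) := by
  have hconst : ExpBounded X (j + 3) 100 :=
    ExpBounded.mono (j := 2) hX (by omega) (.of_le_const hX (by norm_num))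
  have hprod := (hN.pow (le_pow_of_three_le (j := 2) hX (by norm_num : 6 ≤ 3 ^ 2))).mul hX
    (hM.pow (le_pow_of_three_le (j := 2) hX (by norm_num : 4 ≤ 3 ^ 2)))
  exact ((hconst.mul hX hprod).mul hX hM).mono hX (by omega)

lemma expBounded_interiorScale (hX : 3 ≤ X) (hN : ExpBounded X 1 N) (hM : ExpBounded X 1 M) :
    ExpBounded X 7 (interiorScale N M) :=
  (ExpBounded.of_le_const (k := 1) hX (by norm_num)).mul hX (expBounded_walkBound hX hN hM)

lemma expBounded_stripScale (hX : 3 ≤ X) (hN : ExpBounded X 1 N) (hM : ExpBounded X 1 M) :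
    ExpBounded X 15 (stripScale N M) := by
  have hD := expBounded_interiorScale hX hN hM
  have hwalk : ExpBounded X 13 _ :=
    expBounded_walkBound hX (hN.mul hX hD) (hM.mono hX (by norm_num))
  exact ((ExpBounded.of_le_const (k := 1) hX (by norm_num)).mul hX hwalk).add hX (hD.add hX hM)

lemma expBounded_pieceBound (hX : 3 ≤ X) (hB : ExpBounded X j B) (hj : 2 ≤ j) :
    ExpBounded X (j + 4) (pieceBound B) := by
  have hconst : ExpBounded X 2 21 := .of_le_const hX (by norm_num)
  have hpow := (hconst.mul hX hB).pow (le_pow_of_three_le (j := 2) hX (by norm_num : 4 ≤ 3 ^ 2))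
  exact (((hconst.of_le (by norm_num : 8 ≤ 21)).mul hX hB).mul hX hpow).mono hX (by omega)

lemma expBounded_boxRadius (hX : 3 ≤ X) (hB : ExpBounded X 15 B) (hC : ExpBounded X 16 C)
    (hk : 2 ^ k ≤ X ^ 4) : ExpBounded X 49 (boxRadius B C k) := by
  have hexp : 64 ^ k ≤ X ^ 24 :=
    calc 64 ^ k = (2 ^ k) ^ 6 := by rw [← pow_mul, mul_comm, pow_mul]; norm_num
      _ ≤ (X ^ 4) ^ 6 := Nat.pow_le_pow_left hk 6
      _ = X ^ 24 := by rw [← pow_mul]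
  have hpiece : ExpBounded X 43 (pieceBound B ^ 64 ^ k) :=
    (expBounded_pieceBound hX hB (by norm_num)).pow hexp
  have hthree : ExpBounded X 1 3 := .of_le_const hX (by norm_num)
  have hone : ExpBounded X 1 1 := .of_le_const hX (by norm_num)
  exact (((hthree.mul hX hpiece).mul hX (hC.add hX hone)).pow
    (le_pow_of_three_le (j := 3) hX (by norm_num : 20 ≤ 3 ^ 3))).add hX hB

lemma expBounded_runLengthBound (hX : 3 ≤ X) (hN : N ≤ X) (hM : ExpBounded X 1 M)
    (hC : ExpBounded X 2 C) : ExpBounded X 52 (runLengthBound N M C) := by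
  have hN' : ExpBounded X 1 N := .of_le_pow (by rwa [pow_one])
  have hB := expBounded_stripScale hX hN' hM
  have hk : 2 ^ (Nat.log 2 (4 * N + 3) + 1) ≤ X ^ 4 :=
    calc 2 ^ (Nat.log 2 (4 * N + 3) + 1) ≤ (4 * N + 3) * 2 := by
          rw [pow_succ]
          exact Nat.mul_le_mul_right 2 (Nat.pow_log_le_self 2 (by omega))
      _ ≤ 3 ^ 3 * X := by omega
      _ ≤ X ^ 3 * X := Nat.mul_le_mul_right X (Nat.pow_le_pow_left hX 3)
  have hR := expBounded_boxRadius hX hB (hB.add hX hC) hk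
  have hone : ExpBounded X 1 1 := .of_le_const hX (by norm_num)
  exact hN'.mul hX ((hR.add hX hone).pow
    (le_pow_of_three_le (j := 1) hX (by norm_num : 2 ≤ 3 ^ 1)))

lemma expBounded_of_log_lt (h : Nat.log 2 N < X) : ExpBounded X 1 N := by
  rw [ExpBounded, pow_one]
  exact (Nat.lt_pow_succ_log_self one_lt_two _).le.trans (Nat.pow_le_pow_right two_pos h)

end Estimates

/-- If `q(v)` is reachable from `p(u)` in a 2-VASS then it is
reachable by a run whose length is at most exponential in the sizes of the
binary encodings of the 2-VASS and of `u` and `v`. -/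
theorem statement16 :
    ∃ c : ℕ, ∀ (Q : Finset ℕ) (T : Finset (Trans 2)),
      (∀ t ∈ T, t.1 ∈ Q ∧ t.2.2 ∈ Q) →
      ∀ (p q : ℕ) (u v : Vec 2),
        Reach T (NatSet 2) p u q v →
        ∃ π, Run T (NatSet 2) p u q v π ∧
          π.length ≤
            2 ^ ((Q.card + T.card + Nat.log 2 (tnorm T + 2) +
                  Nat.log 2 (vnorm u + 2) + Nat.log 2 (vnorm v + 2)) ^ c) := by
  refine ⟨52, fun Q T hT p q u v h => ?_⟩
  obtain ⟨π, hπ, hlength⟩ := exists_run_length_le (fun _ _ _ ht => (hT _ ht).2) h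
  refine ⟨π, hπ, hlength.trans ?_⟩
  have hlog : ∀ N, 1 ≤ Nat.log 2 (N + 2) := fun N => Nat.log_pos one_lt_two (by omega)
  have hlogT := hlog (tnorm T)
  have hlogu := hlog (vnorm u)
  have hlogv := hlog (vnorm v)
  set X := Q.card + T.card + Nat.log 2 (tnorm T + 2) + Nat.log 2 (vnorm u + 2) +
    Nat.log 2 (vnorm v + 2)
  have hX₃ : 3 ≤ X := by omega
  have hM : ExpBounded X 1 (tnorm T + 2) := expBounded_of_log_lt (by omega)
  have hu : ExpBounded X 1 (vnorm u + 2) := expBounded_of_log_lt (by omega)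
  have hv : ExpBounded X 1 (vnorm v + 2) := expBounded_of_log_lt (by omega)
  exact expBounded_runLengthBound hX₃ (by omega) (hM.of_le (by omega))
    ((hu.add hX₃ hv).of_le (by omega))

end VASS
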